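/- Let H²_β be a weighted Hardy space of polynomial growth, let h₁, h₂ be analytic on an open neighborhood of the closed unit disk with {M_{h₁}}' = {M_{h₂}}' = {M_z}' on H²_β, and let m₁, m₂ be positive integers. Then the direct sum of m₁ copies of M_{h₁} is similar to the direct sum of m₂ copies of M_{h₂} if and only if m₁ = m₂ and M_{h₁} is similar to M_{h₂}, i.e. there exists φ ∈ Aut(𝔻) such that h₂ = h₁ ∘ φ. -/

import Mathlib

noncomputable section

open Complex Filter Topology

/-- The sequence-space (ℓ²) model of a weighted Hardy space `H²_β`.
An element `a : H2` represents the analytic function whose `k`-th Taylor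
coefficient is `a k / β k` (so that `‖a‖` is exactly the `H²_β`-norm). -/
abbrev H2 : Type := lp (fun _ : ℕ => ℂ) 2

/-- The direct sum (ℓ²-sense) of `m` copies of `H2`. -/
abbrev Hm (m : ℕ) : Type := PiLp 2 (fun _ : Fin m => H2)

/-- The open unit disk 𝔻 ⊆ ℂ. -/
def unitDisk : Set ℂ := Metric.ball 0 1

/-- `β_0 = 1` and `β_k = ∏_{j=1}^k w_j`. -/
def betaSeq (w : ℕ → ℝ) (k : ℕ) : ℝ := ∏ j ∈ Finset.Icc 1 k, w j

/-- The analytic function on 𝔻 represented by the vector `a` in the model of `H²_β`: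
`f(z) = ∑_k (a k / β k) z^k`. -/
def repFun (β : ℕ → ℝ) (a : H2) (z : ℂ) : ℂ := ∑' k, (a k / (β k : ℂ)) * z ^ k

/-- `T` is (the ℓ²-model of) the multiplication operator `M_g` on `H²_β`.
Existence of such a `T` says precisely that `M_g` is bounded on `H²_β`. -/
def RepMul (β : ℕ → ℝ) (g : ℂ → ℂ) (T : H2 →L[ℂ] H2) : Prop :=
  ∀ a : H2, ∀ z ∈ unitDisk, repFun β (T a) z = g z * repFun β a z

/-- `T` is (the ℓ²-model of) the composition operator `C_ψ` on `H²_β`.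
Existence of such a `T` says precisely that `C_ψ` is bounded on `H²_β`. -/
def RepComp (β : ℕ → ℝ) (ψ : ℂ → ℂ) (T : H2 →L[ℂ] H2) : Prop :=
  ∀ a : H2, ∀ z ∈ unitDisk, repFun β (T a) z = repFun β a (ψ z)

/-- The Möbius factor `φ_{z₀}(z) = (z₀ - z)/(1 - conj z₀ · z)`. -/
def mobius (z₀ z : ℂ) : ℂ := (z₀ - z) / (1 - (starRingEnd ℂ) z₀ * z)

/-- `φ` belongs to `Aut(𝔻)`, i.e. `φ(z) = e^{iθ}(z₀ - z)/(1 - conj z₀ · z)`. -/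
def IsDiskAut (φ : ℂ → ℂ) : Prop :=
  ∃ (θ : ℝ) (z₀ : ℂ), z₀ ∈ unitDisk ∧
    ∀ z, φ z = Complex.exp (θ * Complex.I) * mobius z₀ z

/-- `B` is a finite Blaschke product of order `m`. -/
def IsBlaschke (m : ℕ) (B : ℂ → ℂ) : Prop :=
  ∃ (θ : ℝ) (zs : Fin m → ℂ), (∀ j, zs j ∈ unitDisk) ∧
    ∀ z, B z = Complex.exp (θ * Complex.I) * ∏ j, mobius (zs j) z

/-- `w` is a positive weight sequence tending to `1` such that the weighted Hardy
space `H²_β` is of polynomial growth: `sup_k (k+1)|w_k - 1| < ∞`. -/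
def PolyGrowth (w : ℕ → ℝ) : Prop :=
  (∀ k, 1 ≤ k → 0 < w k) ∧ Tendsto w atTop (nhds 1) ∧
    ∃ M : ℝ, ∀ k : ℕ, 1 ≤ k → ((k : ℝ) + 1) * |w k - 1| ≤ M

/-- `f` is analytic on an open neighbourhood of the closed unit disk. -/
def AnalyticOnClosedDisk (f : ℂ → ℂ) : Prop :=
  ∃ U : Set ℂ, IsOpen U ∧ Metric.closedBall (0:ℂ) 1 ⊆ U ∧ AnalyticOnNhd ℂ f U

/-- The commutant of a bounded operator on `H2`. -/
def commutant (A : H2 →L[ℂ] H2) : Set (H2 →L[ℂ] H2) := {T | T * A = A * T}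

/-!
Let `X` intertwine `⊕ M_{h₁}` and `⊕ M_{h₂}`. Conjugation by `X` preserves double commutants, and
the double commutant of either operator contains `⊕ M_z` and consists of operators `⊕ M_ψ`; so `X`
carries `⊕ M_z` to some `⊕ M_ψ`. Since `f - f(μ)` is divisible by `z - μ` for `|μ| < 1` and
`M_z - μ` is onto for `|μ| > 1`, the function `ψ` maps the disk to itself, `h₂ = h₁ ∘ ψ`, and
comparing fibre dimensions gives `m₂ ≤ m₁`. The same argument for `X⁻¹` yields the reverse
inequality and the inverse of `ψ`, which is therefore an automorphism by the Schwarz lemma.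

Conversely, `C_φ` conjugates `M_{h₁}` to `M_{h₁ ∘ φ}`, so it suffices to show that `C_φ` is
bounded. Rotations act isometrically, which reduces this to the Möbius factor of a real number
`0 ≤ r < 1`, whose derivatives satisfy `(1 - r²) ∂ᵣ = -(1 - z²) ∂_z`. Polynomial growth makes the
off-diagonal terms `β_k² (k + 1) - β_{k+1}² k` of the corresponding quadratic form
`O(min(β_k², β_{k+1}²))`, so the norm of `f ∘ mobius r` is controlled by Gronwall's inequality.
-/

/-! ### Weight sequences -/

/-- The positive weights `β` whose consecutive ratios tend to `1`. Polynomial growth implies this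
condition, which is all that the analysis of intertwining operators needs. The class is closed under
`β ↦ β⁻¹`, which exchanges statements about `H²_β` with statements about its dual. -/
structure IsRegularWeight (β : ℕ → ℝ) : Prop where
  pos : ∀ k, 0 < β k
  tendsto_ratio : Tendsto (fun k => β (k + 1) / β k) atTop (𝓝 1)

lemma IsRegularWeight.cast_ne_zero {β : ℕ → ℝ} (hβ : IsRegularWeight β) (k : ℕ) :
    (β k : ℂ) ≠ 0 :=
  ofReal_ne_zero.2 (hβ.pos k).ne'

lemma IsRegularWeight.inv {β : ℕ → ℝ} (hβ : IsRegularWeight β) :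
    IsRegularWeight fun k => (β k)⁻¹ where
  pos k := inv_pos.2 (hβ.pos k)
  tendsto_ratio := by
    simpa only [inv_one, inv_div, inv_div_inv] using hβ.tendsto_ratio.inv₀ one_ne_zero

lemma exists_add_le_mul_of_antitoneOn {b : ℕ → ℝ} (hpos : ∀ k, 0 < b k) {N : ℕ}
    (hb : AntitoneOn b (Set.Ici N)) : ∃ C, 0 < C ∧ ∀ k n, b (k + n) ≤ C * b k := by
  obtain ⟨C, hC⟩ := ((Finset.range (N + 1) ×ˢ Finset.range (N + 1)).image
    fun p => b p.1 / b p.2).exists_le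
  have hfin : ∀ j ≤ N, ∀ k ≤ N, b j ≤ C * b k := fun j hj k hk =>
    (div_le_iff₀ (hpos k)).1 (hC _ (Finset.mem_image.2 ⟨(j, k), by simp; omega, rfl⟩))
  have hC_one : 1 ≤ C := (le_mul_iff_one_le_left (hpos 0)).1 (hfin 0 N.zero_le 0 N.zero_le)
  refine ⟨C, by linarith, fun k n => ?_⟩
  rcases le_total k N with hk | hk
  · rcases le_total (k + n) N with hkn | hkn
    · exact hfin _ hkn k hk
    · exact (hb Set.self_mem_Ici hkn hkn).trans (hfin N le_rfl k hk)
  · calc b (k + n) ≤ b k := hb hk (hk.trans (Nat.le_add_right k n)) (Nat.le_add_right k n)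
      _ ≤ C * b k := le_mul_of_one_le_left (hpos k).le hC_one

lemma IsRegularWeight.exists_add_le_mul_pow {β : ℕ → ℝ} (hβ : IsRegularWeight β) {ρ : ℝ}
    (hρ : 1 < ρ) : ∃ C, 0 < C ∧ ∀ k n, β (k + n) ≤ C * ρ ^ n * β k := by
  have hρ₀ : 0 < ρ := one_pos.trans hρ
  obtain ⟨N, hN⟩ := eventually_atTop.1 (hβ.tendsto_ratio.eventually_le_const hρ)
  have hanti : AntitoneOn (fun k => β k / ρ ^ k) (Set.Ici N) :=
    antitoneOn_of_succ_le Set.ordConnected_Ici fun k _ hk _ => by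
      rw [Order.succ_eq_add_one, div_le_div_iff₀ (by positivity) (by positivity), pow_succ]
      have := (div_le_iff₀ (hβ.pos k)).1 (hN k hk)
      nlinarith [pow_pos hρ₀ k]
  obtain ⟨C, hC, hle⟩ := exists_add_le_mul_of_antitoneOn
    (fun k => div_pos (hβ.pos k) (pow_pos hρ₀ k)) hanti
  refine ⟨C, hC, fun k n => ?_⟩
  calc β (k + n) = β (k + n) / ρ ^ (k + n) * ρ ^ (k + n) := by field_simp
    _ ≤ C * (β k / ρ ^ k) * ρ ^ (k + n) := by gcongr; exact hle k n
    _ = C * ρ ^ n * β k := by field_simp; ring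

lemma exists_one_lt_mul_lt_one {r : ℝ} (h₀ : 0 ≤ r) (h₁ : r < 1) : ∃ ρ, 1 < ρ ∧ ρ * r < 1 := by
  refine ⟨2 / (1 + r), ?_, ?_⟩
  · rw [lt_div_iff₀ (by positivity)]; linarith
  · rw [div_mul_eq_mul_div, div_lt_one (by positivity)]; linarith

lemma IsRegularWeight.exists_mul_pow_le {β : ℕ → ℝ} (hβ : IsRegularWeight β) {r : ℝ} (hr₀ : 0 ≤ r)
    (hr₁ : r < 1) : ∃ C σ, 0 ≤ σ ∧ σ < 1 ∧ ∀ k, β k * r ^ k ≤ C * σ ^ k := by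
  obtain ⟨ρ, hρ, hρr⟩ := exists_one_lt_mul_lt_one hr₀ hr₁
  obtain ⟨C, -, hC⟩ := hβ.exists_add_le_mul_pow hρ
  refine ⟨C * β 0, ρ * r, by positivity, hρr, fun k => ?_⟩
  calc β k * r ^ k ≤ C * ρ ^ k * β 0 * r ^ k := by gcongr; simpa using hC 0 k
    _ = C * β 0 * (ρ * r) ^ k := by ring

/-- Polynomial growth of `H²_β`, expressed through `β` itself rather than through the ratios
`w (k + 1) = β (k + 1) / β k`. -/
structure IsPolyGrowthWeight (β : ℕ → ℝ) : Prop where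
  pos : ∀ k, 0 < β k
  exists_bound : ∃ M, ∀ k : ℕ, (k + 1) * |β (k + 1) / β k - 1| ≤ M

lemma IsPolyGrowthWeight.isRegularWeight {β : ℕ → ℝ} (hβ : IsPolyGrowthWeight β) :
    IsRegularWeight β where
  pos := hβ.pos
  tendsto_ratio := by
    obtain ⟨M, hM⟩ := hβ.exists_bound
    rw [tendsto_iff_norm_sub_tendsto_zero]
    refine squeeze_zero (fun _ => norm_nonneg _) (fun k => ?_)
      (g := fun k : ℕ => M * (1 / ((k : ℝ) + 1))) ?_
    · rw [mul_one_div, le_div_iff₀' (by positivity)]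
      exact hM k
    · simpa using tendsto_one_div_add_atTop_nhds_zero_nat.const_mul M

lemma PolyGrowth.isPolyGrowthWeight {w : ℕ → ℝ} (hw : PolyGrowth w) :
    IsPolyGrowthWeight (betaSeq w) := by
  obtain ⟨hpos, -, M, hM⟩ := hw
  have hβ : ∀ k, 0 < betaSeq w k := fun k =>
    Finset.prod_pos fun j hj => hpos j (Finset.mem_Icc.1 hj).1
  refine ⟨hβ, M, fun k => ?_⟩
  have hratio : betaSeq w (k + 1) / betaSeq w k = w (k + 1) := by
    rw [div_eq_iff (hβ k).ne', mul_comm]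
    exact Finset.prod_Icc_succ_top (Nat.le_add_left 1 k) w
  rw [hratio]
  refine le_trans ?_ (hM (k + 1) (Nat.le_add_left 1 k))
  gcongr
  simp

/-! ### The sequence space `ℓ²` -/

lemma H2.hasSum_norm_sq (a : H2) : HasSum (fun k => ‖a k‖ ^ 2) (‖a‖ ^ 2) := by
  simpa using lp.hasSum_norm (p := 2) (by norm_num) a

lemma H2.summable_norm_sq (a : H2) : Summable fun k => ‖a k‖ ^ 2 := a.hasSum_norm_sq.summable

lemma memℓp_two_iff_summable_norm_sq {f : ℕ → ℂ} :
    Memℓp f 2 ↔ Summable fun k => ‖f k‖ ^ 2 := by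
  simp [memℓp_gen_iff]

lemma memℓp_two_of_norm_le_comp {f : ℕ → ℂ} {a : H2} {C : ℝ} {e : ℕ → ℕ}
    (he : Function.Injective e) (h : ∀ k, ‖f k‖ ≤ C * ‖a (e k)‖) : Memℓp f 2 := by
  refine memℓp_two_iff_summable_norm_sq.2 (Summable.of_nonneg_of_le (fun _ => sq_nonneg _)
    (fun k => pow_le_pow_left₀ (norm_nonneg _) (h k) 2) ?_)
  simpa only [mul_pow, Function.comp_def] using
    (a.summable_norm_sq.comp_injective he).mul_left (C ^ 2)

lemma memℓp_two_of_norm_le_mul_pow {f : ℕ → ℂ} {C σ : ℝ} (hσ₀ : 0 ≤ σ) (hσ₁ : σ < 1)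
    (h : ∀ k, ‖f k‖ ≤ C * σ ^ k) : Memℓp f 2 := by
  have hgeom : Summable fun k => C ^ 2 * (σ ^ 2) ^ k :=
    (summable_geometric_of_lt_one (sq_nonneg σ) (pow_lt_one₀ hσ₀ hσ₁ two_ne_zero)).mul_left _
  refine memℓp_two_iff_summable_norm_sq.2 (hgeom.of_nonneg_of_le (fun _ => sq_nonneg _) fun k => ?_)
  calc ‖f k‖ ^ 2 ≤ (C * σ ^ k) ^ 2 := by gcongr; exact h k
    _ = C ^ 2 * (σ ^ 2) ^ k := by ring

lemma H2.norm_le_of_norm_le_comp {b a : H2} {C : ℝ} (hC : 0 ≤ C) {e : ℕ → ℕ}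
    (he : Function.Injective e) (h : ∀ k, ‖b k‖ ≤ C * ‖a (e k)‖) : ‖b‖ ≤ C * ‖a‖ := by
  refine le_of_sq_le_sq ?_ (by positivity)
  have hsum := a.summable_norm_sq
  calc ‖b‖ ^ 2 = ∑' k, ‖b k‖ ^ 2 := b.hasSum_norm_sq.tsum_eq.symm
    _ ≤ ∑' k, C ^ 2 * ‖a (e k)‖ ^ 2 :=
        b.summable_norm_sq.tsum_le_tsum
          (fun k => (pow_le_pow_left₀ (norm_nonneg _) (h k) 2).trans_eq (mul_pow _ _ 2))
          ((hsum.comp_injective he).mul_left _)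
    _ = C ^ 2 * ∑' k, ‖a (e k)‖ ^ 2 := tsum_mul_left
    _ ≤ C ^ 2 * ∑' k, ‖a k‖ ^ 2 := by
        gcongr ?_ * ?_
        exact tsum_comp_le_tsum_of_inj hsum (fun _ => sq_nonneg _) he
    _ = (C * ‖a‖) ^ 2 := by rw [a.hasSum_norm_sq.tsum_eq, mul_pow]

lemma exists_clm_apply_eq_mul_comp {v : ℕ → ℂ} {C : ℝ} (hv : ∀ k, ‖v k‖ ≤ C) {e : ℕ → ℕ}
    (he : Function.Injective e) : ∃ B : H2 →L[ℂ] H2, ∀ a k, B a k = v k * a (e k) := by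
  have hle : ∀ (a : H2) k, ‖v k * a (e k)‖ ≤ C * ‖a (e k)‖ := fun a k => by
    rw [norm_mul]
    gcongr
    exact hv k
  refine ⟨LinearMap.mkContinuous
    { toFun := fun a => ⟨fun k => v k * a (e k), memℓp_two_of_norm_le_comp he (hle a)⟩
      map_add' := fun a b => by ext k; exact mul_add _ _ _
      map_smul' := fun c a => by ext k; exact mul_left_comm _ _ _ } C fun a => ?_, fun _ _ => rfl⟩
  exact H2.norm_le_of_norm_le_comp ((norm_nonneg _).trans (hv 0)) he (hle a)

/-! ### Functions on the disk represented by sequences -/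

lemma mem_unitDisk {z : ℂ} : z ∈ unitDisk ↔ ‖z‖ < 1 := mem_ball_zero_iff

lemma unitDisk_eq_eball : unitDisk = Metric.eball 0 1 := by
  rw [← ENNReal.ofReal_one, Metric.eball_ofReal, unitDisk]

lemma hasFPowerSeriesOnBall_ofScalars {p : ℕ → ℂ} {f : ℂ → ℂ} {r : ENNReal} (hr : 0 < r)
    (h : ∀ z ∈ Metric.eball (0 : ℂ) r, HasSum (fun k => p k * z ^ k) (f z)) :
    HasFPowerSeriesOnBall f (FormalMultilinearSeries.ofScalars ℂ p) 0 r where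
  r_le := by
    refine ENNReal.le_of_forall_nnreal_lt fun s hs => ?_
    have hmem : (s : ℂ) ∈ Metric.eball (0 : ℂ) r := by
      simpa [edist_zero_right, enorm_eq_nnnorm] using hs
    refine FormalMultilinearSeries.le_radius_of_tendsto _ (l := 0) ?_
    simpa [FormalMultilinearSeries.ofScalars_norm] using
      (h _ hmem).summable.tendsto_atTop_zero.norm
  r_pos := hr
  hasSum {z} hz := by
    simpa [FormalMultilinearSeries.ofScalars_apply_eq, mul_comm] using h z hz

lemma coeff_eq_of_hasSum_unitDisk {p q : ℕ → ℂ} {f : ℂ → ℂ}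
    (hp : ∀ z ∈ unitDisk, HasSum (fun k => p k * z ^ k) (f z))
    (hq : ∀ z ∈ unitDisk, HasSum (fun k => q k * z ^ k) (f z)) : p = q := by
  rw [unitDisk_eq_eball] at hp hq
  exact FormalMultilinearSeries.ofScalars_series_injective ℂ ℂ <|
    (hasFPowerSeriesOnBall_ofScalars one_pos hp).hasFPowerSeriesAt.eq_formalMultilinearSeries
      (hasFPowerSeriesOnBall_ofScalars one_pos hq).hasFPowerSeriesAt

namespace IsRegularWeight

variable {β : ℕ → ℝ} {z : ℂ}

lemma memℓp_kernel (hβ : IsRegularWeight β) (hz : z ∈ unitDisk) :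
    Memℓp (fun k => (starRingEnd ℂ) (z ^ k / β k)) 2 := by
  obtain ⟨C, σ, hσ₀, hσ₁, hC⟩ := hβ.inv.exists_mul_pow_le (norm_nonneg z) (mem_unitDisk.1 hz)
  refine memℓp_two_of_norm_le_mul_pow (C := C) hσ₀ hσ₁ fun k => ?_
  rw [RCLike.norm_conj, norm_div, norm_pow, norm_real, Real.norm_of_nonneg (hβ.pos k).le,
    div_eq_inv_mul]
  exact hC k

/-- Evaluation at a point of the disk, as the inner product with the reproducing kernel. -/
def evalCLM (hβ : IsRegularWeight β) (hz : z ∈ unitDisk) : H2 →L[ℂ] ℂ :=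
  innerSL ℂ ⟨_, hβ.memℓp_kernel hz⟩

lemma hasSum_evalCLM (hβ : IsRegularWeight β) (hz : z ∈ unitDisk) (a : H2) :
    HasSum (fun k => a k / β k * z ^ k) (hβ.evalCLM hz a) := by
  refine (lp.hasSum_inner (𝕜 := ℂ) ⟨_, hβ.memℓp_kernel hz⟩ a).congr_fun fun k => ?_
  rw [RCLike.inner_apply, conj_conj]
  ring

lemma evalCLM_apply (hβ : IsRegularWeight β) (hz : z ∈ unitDisk) (a : H2) :
    hβ.evalCLM hz a = repFun β a z :=
  (hβ.hasSum_evalCLM hz a).tsum_eq.symm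

lemma repFun_sub_smul (hβ : IsRegularWeight β) (hz : z ∈ unitDisk) (a b : H2) (c : ℂ) :
    repFun β (a - c • b) z = repFun β a z - c * repFun β b z := by
  simp only [← hβ.evalCLM_apply hz, map_sub, map_smul, smul_eq_mul]

lemma hasSum_repFun (hβ : IsRegularWeight β) (hz : z ∈ unitDisk) (a : H2) :
    HasSum (fun k => a k / β k * z ^ k) (repFun β a z) :=
  hβ.evalCLM_apply hz a ▸ hβ.hasSum_evalCLM hz a

lemma differentiableOn_repFun (hβ : IsRegularWeight β) (a : H2) :
    DifferentiableOn ℂ (repFun β a) unitDisk := by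
  have hsum : ∀ z ∈ unitDisk, _ := fun z hz => hβ.hasSum_repFun hz a
  rw [unitDisk_eq_eball] at hsum ⊢
  exact (hasFPowerSeriesOnBall_ofScalars one_pos hsum).differentiableOn

lemma ext_repFun (hβ : IsRegularWeight β) {a b : H2}
    (h : Set.EqOn (repFun β a) (repFun β b) unitDisk) : a = b := by
  have hcoeff := coeff_eq_of_hasSum_unitDisk (fun z hz => hβ.hasSum_repFun hz a)
    fun z hz => (h hz).symm ▸ hβ.hasSum_repFun hz b
  ext k
  exact (div_left_inj' (hβ.cast_ne_zero k)).1 (congrFun hcoeff k)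

end IsRegularWeight

/-! ### Backward shifts -/

lemma isUnit_one_sub_of_isUnit_one_sub_pow {R : Type*} [Ring R] {x : R} {n : ℕ}
    (h : IsUnit (1 - x ^ n)) : IsUnit (1 - x) := by
  have hcomm : Commute (∑ i ∈ Finset.range n, x ^ i) (1 - x) :=
    (geom_sum_mul_neg x n).trans (mul_neg_geom_sum x n).symm
  rw [← geom_sum_mul_neg x n, hcomm.isUnit_mul_iff] at h
  exact h.2

/-- `B` is the weighted backward shift `a ↦ (β (k + 1) / β k * a (k + 1))_k` on `ℓ²`. For the
weight `β` it is the adjoint of `M_z` on `H²_β`, for the weight `β⁻¹` it is the left inverse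
`f ↦ (f - f 0) / z` of `M_z`. -/
def IsBackwardShift (β : ℕ → ℝ) (B : H2 →L[ℂ] H2) : Prop :=
  ∀ a k, B a k = (β (k + 1) / β k : ℝ) * a (k + 1)

namespace IsRegularWeight

variable {β : ℕ → ℝ}

lemma exists_isBackwardShift (hβ : IsRegularWeight β) : ∃ B, IsBackwardShift β B := by
  obtain ⟨C, -, hC⟩ := hβ.exists_add_le_mul_pow one_lt_two
  refine exists_clm_apply_eq_mul_comp (C := C * 2) (fun k => ?_) Nat.succ_injective
  rw [norm_real, Real.norm_of_nonneg (div_pos (hβ.pos _) (hβ.pos k)).le, div_le_iff₀ (hβ.pos k)]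
  simpa using hC k 1

lemma isBackwardShift_pow_apply (hβ : IsRegularWeight β) {B : H2 →L[ℂ] H2}
    (hB : IsBackwardShift β B) (n : ℕ) (a : H2) (k : ℕ) :
    (B ^ n) a k = (β (k + n) / β k : ℝ) * a (k + n) := by
  induction n generalizing k with
  | zero => simp [(hβ.pos k).ne']
  | succ n ih =>
    have := hβ.cast_ne_zero (k + 1)
    rw [pow_succ', mul_apply_eq_comp, hB, ih, Nat.add_right_comm k 1 n, add_assoc k n 1]
    push_cast
    field_simp

lemma isUnit_one_sub_smul (hβ : IsRegularWeight β) {B : H2 →L[ℂ] H2} (hB : IsBackwardShift β B)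
    {μ : ℂ} (hμ : μ ∈ unitDisk) : IsUnit (1 - μ • B) := by
  obtain ⟨ρ, hρ, hρμ⟩ := exists_one_lt_mul_lt_one (norm_nonneg μ) (mem_unitDisk.1 hμ)
  obtain ⟨C, hC, hle⟩ := hβ.exists_add_le_mul_pow hρ
  have hpow : ∀ n, ‖B ^ n‖ ≤ C * ρ ^ n := fun n => by
    refine ContinuousLinearMap.opNorm_le_bound _ (by positivity) fun a =>
      H2.norm_le_of_norm_le_comp (by positivity) (add_left_injective n) fun k => ?_
    rw [hβ.isBackwardShift_pow_apply hB, norm_mul, norm_real,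
      Real.norm_of_nonneg (div_pos (hβ.pos _) (hβ.pos k)).le]
    gcongr
    exact (div_le_iff₀ (hβ.pos k)).2 (hle k n)
  have htendsto : Tendsto (fun n => C * (ρ * ‖μ‖) ^ n) atTop (𝓝 0) := by
    simpa using (tendsto_pow_atTop_nhds_zero_of_lt_one (by positivity) hρμ).const_mul C
  obtain ⟨n, hn⟩ := (htendsto.eventually_lt_const one_pos).exists
  refine isUnit_one_sub_of_isUnit_one_sub_pow (n := n) (isUnit_one_sub_of_norm_lt_one ?_)
  calc ‖(μ • B) ^ n‖ = ‖μ‖ ^ n * ‖B ^ n‖ := by rw [smul_pow, norm_smul, norm_pow]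
    _ ≤ ‖μ‖ ^ n * (C * ρ ^ n) := by gcongr; exact hpow n
    _ = C * (ρ * ‖μ‖) ^ n := by ring
    _ < 1 := hn

lemma mul_repFun_of_isBackwardShift (hβ : IsRegularWeight β) {L : H2 →L[ℂ] H2}
    (hL : IsBackwardShift (fun k => (β k)⁻¹) L) (a : H2) {z : ℂ} (hz : z ∈ unitDisk) :
    z * repFun β (L a) z = repFun β a z - repFun β a 0 := by
  have hzero : repFun β a 0 = a 0 / β 0 * z ^ 0 := by
    rw [repFun, tsum_eq_single 0 fun k hk => by rw [zero_pow hk, mul_zero], pow_zero, pow_zero]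
  have htail := (hasSum_nat_add_iff' 1).2 (hβ.hasSum_repFun hz a)
  rw [Finset.sum_range_one, ← hzero] at htail
  refine ((hβ.hasSum_repFun hz (L a)).mul_left z |>.congr_fun fun k => ?_).unique htail
  have := hβ.cast_ne_zero k
  rw [hL]
  push_cast
  field_simp
  ring

end IsRegularWeight

/-! ### Multiplication operators and the commutant of `M_z` -/

/-- The vector representing the constant function `1`. -/
def constOne (β : ℕ → ℝ) : H2 := lp.single 2 0 (β 0 : ℂ)

/-- The function `T 1`; when `T` commutes with `M_z`, it is the multiplier that `T` represents. -/
def symbol (β : ℕ → ℝ) (T : H2 →L[ℂ] H2) : ℂ → ℂ := repFun β (T (constOne β))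

lemma RepMul.repFun_sub_smul {β : ℕ → ℝ} (hβ : IsRegularWeight β) {g : ℂ → ℂ} {T : H2 →L[ℂ] H2}
    (hT : RepMul β g T) {z : ℂ} (hz : z ∈ unitDisk) (a : H2) (c : ℂ) :
    repFun β (T a - c • a) z = (g z - c) * repFun β a z := by
  rw [hβ.repFun_sub_smul hz, hT a z hz, sub_mul]

namespace IsRegularWeight

variable {β : ℕ → ℝ} {Tz : H2 →L[ℂ] H2}

lemma repFun_constOne (hβ : IsRegularWeight β) (z : ℂ) : repFun β (constOne β) z = 1 := by
  rw [repFun, tsum_eq_single 0 fun k hk => by simp [constOne, hk]]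
  simp [constOne, hβ.cast_ne_zero 0]

lemma symbol_eq_of_repMul (hβ : IsRegularWeight β) {g : ℂ → ℂ} {T : H2 →L[ℂ] H2}
    (hT : RepMul β g T) {z : ℂ} (hz : z ∈ unitDisk) : symbol β T z = g z := by
  rw [symbol, hT _ z hz, hβ.repFun_constOne, mul_one]

/-- With `L f = (f - f 0) / z`, the quotient `a / (z - μ)` is `(1 - μ L)⁻¹ L a`. -/
lemma exists_mul_sub_smul_eq_of_repFun_eq_zero (hβ : IsRegularWeight β)
    (hTz : RepMul β (fun z => z) Tz) {μ : ℂ} (hμ : μ ∈ unitDisk) {a : H2}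
    (ha : repFun β a μ = 0) : ∃ b, Tz b - μ • b = a := by
  obtain ⟨L, hL⟩ := hβ.inv.exists_isBackwardShift
  obtain ⟨b, hb : b - μ • L b = L a⟩ :=
    (ContinuousLinearMap.isUnit_iff_bijective.1 (hβ.inv.isUnit_one_sub_smul hL hμ)).2 (L a)
  have hquot : ∀ z ∈ unitDisk,
      (z - μ) * repFun β b z = repFun β a z - (repFun β a 0 + μ * repFun β b 0) := fun z hz => by
    have hbz := congrArg (repFun β · z) hb
    simp only [hβ.repFun_sub_smul hz] at hbz
    linear_combination z * hbz + hβ.mul_repFun_of_isBackwardShift hL a hz +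
      μ * hβ.mul_repFun_of_isBackwardShift hL b hz
  refine ⟨b, hβ.ext_repFun fun z hz => ?_⟩
  rw [hTz.repFun_sub_smul hβ hz]
  linear_combination hquot z hz - hquot μ hμ - ha

lemma repMul_symbol (hβ : IsRegularWeight β) (hTz : RepMul β (fun z => z) Tz) {T : H2 →L[ℂ] H2}
    (hT : T ∈ commutant Tz) : RepMul β (symbol β T) T := fun a z hz => by
  have hvanish : repFun β (a - repFun β a z • constOne β) z = 0 := by
    rw [hβ.repFun_sub_smul hz, hβ.repFun_constOne, mul_one, sub_self]
  obtain ⟨b, hb⟩ := hβ.exists_mul_sub_smul_eq_of_repFun_eq_zero hTz hz hvanish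
  have hTb : Tz (T b) - z • T b = T a - repFun β a z • T (constOne β) := by
    have hcomm : T (Tz b) = Tz (T b) := DFunLike.congr_fun hT b
    rw [← hcomm, ← map_smul, ← map_sub, hb, map_sub, map_smul]
  have hz₀ := hTz.repFun_sub_smul hβ hz (T b) z
  rw [sub_self, zero_mul, hTb, hβ.repFun_sub_smul hz, mul_comm] at hz₀
  exact sub_eq_zero.1 hz₀

lemma apply_zero_of_repMul_id (hβ : IsRegularWeight β) (hTz : RepMul β (fun z => z) Tz) (a : H2) :
    Tz a 0 = 0 ∧ ∀ k, Tz a (k + 1) = (β (k + 1) / β k : ℝ) * a k := by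
  let q : ℕ → ℂ := fun k => k.casesOn 0 fun k => a k / β k
  have hq : ∀ z ∈ unitDisk, HasSum (fun k => q k * z ^ k) (repFun β (Tz a) z) := fun z hz => by
    rw [hTz a z hz, ← hasSum_nat_add_iff' 1]
    simpa [q, pow_succ, mul_assoc, mul_comm, mul_left_comm] using (hβ.hasSum_repFun hz a).mul_left z
  have hcoeff := coeff_eq_of_hasSum_unitDisk (fun z hz => hβ.hasSum_repFun hz (Tz a)) hq
  have h₀ := hβ.cast_ne_zero
  refine ⟨by simpa [q, h₀ 0] using congrFun hcoeff 0, fun k => ?_⟩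
  have hk := (div_eq_iff (h₀ (k + 1))).1 (congrFun hcoeff (k + 1))
  rw [hk]
  push_cast
  ring

lemma isBackwardShift_adjoint (hβ : IsRegularWeight β) (hTz : RepMul β (fun z => z) Tz) :
    IsBackwardShift β (ContinuousLinearMap.adjoint Tz) := fun a k => by
  have hsingle : Tz (lp.single 2 k 1) = lp.single 2 (k + 1) (β (k + 1) / β k : ℂ) := by
    ext j
    rcases j with - | j
    · rw [(hβ.apply_zero_of_repMul_id hTz _).1]
      simp
    · rw [(hβ.apply_zero_of_repMul_id hTz _).2]
      by_cases hj : j = k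
      · subst hj; simp
      · simp [hj]
  have := ContinuousLinearMap.adjoint_inner_right Tz (lp.single 2 k 1) a
  rw [hsingle, lp.inner_single_left, lp.inner_single_left] at this
  simpa [mul_comm] using this

lemma surjective_mul_sub_smul_of_one_lt_norm (hβ : IsRegularWeight β)
    (hTz : RepMul β (fun z => z) Tz) {μ : ℂ} (hμ : 1 < ‖μ‖) (a : H2) :
    ∃ b, Tz b - μ • b = a := by
  have hμ₀ : μ ≠ 0 := norm_pos_iff.1 (one_pos.trans hμ)
  have hmem : star μ⁻¹ ∈ unitDisk := by
    rw [mem_unitDisk, norm_star, norm_inv]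
    exact inv_lt_one_of_one_lt₀ hμ
  have hunit := hβ.isUnit_one_sub_smul (hβ.isBackwardShift_adjoint hTz) hmem
  rw [← ContinuousLinearMap.star_eq_adjoint, ← star_smul, ← star_one, ← star_sub,
    isUnit_star] at hunit
  obtain ⟨b, hb : b - μ⁻¹ • Tz b = (-μ)⁻¹ • a⟩ :=
    (ContinuousLinearMap.isUnit_iff_bijective.1 hunit).2 ((-μ)⁻¹ • a)
  refine ⟨b, ?_⟩
  rw [← smul_inv_smul₀ (neg_ne_zero.2 hμ₀) a, ← hb, smul_sub, neg_smul, neg_smul,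
    smul_inv_smul₀ hμ₀]
  abel

end IsRegularWeight

/-! ### Operators on direct sums -/

section DirectSum

variable {𝕜 ι E F : Type*} [Semiring 𝕜]
  [AddCommMonoid E] [Module 𝕜 E] [TopologicalSpace E]
  [AddCommMonoid F] [Module 𝕜 F] [TopologicalSpace F]

variable (ι) in
/-- The direct sum of copies of `A`, one for each index in `ι`. -/
def diagCLM (A : E →L[𝕜] E) : (ι → E) →L[𝕜] (ι → E) := .piMap fun _ => A

@[simp] lemma diagCLM_apply (A : E →L[𝕜] E) (v : ι → E) (i : ι) : diagCLM ι A v i = A (v i) := rfl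

lemma piCongrRight_diagCLM {C : E ≃L[𝕜] F} {A : E →L[𝕜] E} {B : F →L[𝕜] F}
    (h : ∀ x, C (A x) = B (C x)) (v : ι → E) :
    ContinuousLinearEquiv.piCongrRight (fun _ : ι => C) (diagCLM ι A v) =
      diagCLM ι B (ContinuousLinearEquiv.piCongrRight (fun _ : ι => C) v) :=
  funext fun i => h (v i)

/-- The `(i, j)` entry of an operator on a direct sum of copies of `E`, itself an operator on
`E`. -/
def matrixEntry [DecidableEq ι] (P : (ι → E) →L[𝕜] (ι → E)) (i j : ι) : E →L[𝕜] E :=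
  ContinuousLinearMap.proj i ∘L P ∘L ContinuousLinearMap.single 𝕜 (fun _ => E) j

lemma diagCLM_single [DecidableEq ι] (A : E →L[𝕜] E) (j : ι) (x : E) :
    diagCLM ι A (Pi.single j x) = Pi.single j (A x) :=
  funext fun k => Pi.apply_single (fun _ => A) (fun _ => map_zero A) j x k

lemma commute_diagCLM_iff_forall_matrixEntry [Finite ι] [DecidableEq ι]
    {P : (ι → E) →L[𝕜] (ι → E)} {A : E →L[𝕜] E} :
    Commute P (diagCLM ι A) ↔ ∀ i j, Commute (matrixEntry P i j) A := by
  have := Fintype.ofFinite ι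
  refine ⟨fun h i j => ?_, fun h => ?_⟩
  · ext x
    simpa [matrixEntry, diagCLM_single] using
      congrFun (DFunLike.congr_fun h.eq (Pi.single j x)) i
  · ext v i
    have hsum : ∀ u : ι → E, P u i = ∑ j, matrixEntry P i j (u j) := fun u => by
      conv_lhs => rw [← Finset.univ_sum_single u]
      simp [matrixEntry]
    have hcomm : ∀ j, matrixEntry P i j (A (v j)) = A (matrixEntry P i j (v j)) := fun j =>
      DFunLike.congr_fun (h i j).eq (v j)
    simp [hsum, hcomm]

lemma commute_diagCLM_diagCLM_iff [Nonempty ι] {A B : E →L[𝕜] E} :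
    Commute (diagCLM ι A) (diagCLM ι B) ↔ Commute A B :=
  ⟨fun h => ContinuousLinearMap.ext fun x =>
      congrFun (DFunLike.congr_fun h.eq fun _ => x) (Classical.arbitrary ι),
    fun h => ContinuousLinearMap.ext fun v => funext fun i => DFunLike.congr_fun h.eq (v i)⟩

lemma eq_diagCLM_of_commute_single_comp_proj [DecidableEq ι] {P : (ι → E) →L[𝕜] (ι → E)}
    (h : ∀ i j, Commute
      (ContinuousLinearMap.single 𝕜 (fun _ => E) i ∘L ContinuousLinearMap.proj j) P) (i : ι) :
    P = diagCLM ι (matrixEntry P i i) := by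
  ext v j
  simpa [matrixEntry] using congrFun (DFunLike.congr_fun (h i j).eq v) i

end DirectSum

/-- Conjugation by `X` preserves double commutants, and on a direct sum the double commutant of
`diagCLM ι A` consists of the operators `diagCLM ι S` with `S` in the double commutant of `A`. -/
lemma exists_intertwined_of_commute_of_commute {𝕜 ι κ E F : Type*} [NormedField 𝕜]
    [AddCommGroup E] [Module 𝕜 E] [TopologicalSpace E] [IsTopologicalAddGroup E]
    [ContinuousConstSMul 𝕜 E] [AddCommGroup F] [Module 𝕜 F] [TopologicalSpace F]
    [IsTopologicalAddGroup F] [ContinuousConstSMul 𝕜 F]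
    [Finite ι] [Nonempty κ]
    (X : (ι → E) ≃L[𝕜] (κ → F)) {A : E →L[𝕜] E} {B : F →L[𝕜] F}
    (hX : ∀ v, X (diagCLM ι A v) = diagCLM κ B (X v))
    {T : E →L[𝕜] E} (hT : ∀ R, Commute R A → Commute R T) :
    ∃ S : F →L[𝕜] F, (∀ R, Commute R B → Commute R S) ∧
      ∀ v, X (diagCLM ι T v) = diagCLM κ S (X v) := by
  classical
  have := Fintype.ofFinite ι
  let Φ := X.conjContinuousAlgEquiv
  have hΦ : Φ.symm (diagCLM κ B) = diagCLM ι A := by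
    refine Φ.symm_apply_eq.2 (ContinuousLinearMap.ext fun v => ?_)
    simpa [Φ] using (hX (X.symm v)).symm
  have hΦT : ∀ Z, Commute Z (diagCLM κ B) → Commute Z (Φ (diagCLM ι T)) := fun Z hZ => by
    have hcomm := hZ.map Φ.symm
    rw [hΦ, commute_diagCLM_iff_forall_matrixEntry] at hcomm
    simpa only [Φ.apply_symm_apply] using
      (commute_diagCLM_iff_forall_matrixEntry.2 fun i j => hT _ (hcomm i j)).map Φ
  have hunits : ∀ i j, Commute
      (ContinuousLinearMap.single 𝕜 (fun _ => F) i ∘L ContinuousLinearMap.proj j)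
      (diagCLM κ B) := fun i j =>
    ContinuousLinearMap.ext fun v => (diagCLM_single B i (v j)).symm
  have hdiag := eq_diagCLM_of_commute_single_comp_proj (fun i j => hΦT _ (hunits i j))
    (Classical.arbitrary κ)
  refine ⟨matrixEntry (Φ (diagCLM ι T)) (Classical.arbitrary κ) (Classical.arbitrary κ),
    fun R hR => ?_, fun v => ?_⟩
  · rw [← commute_diagCLM_diagCLM_iff (ι := κ), ← hdiag]
    exact hΦT _ (commute_diagCLM_diagCLM_iff.2 hR)
  · simpa [Φ] using DFunLike.congr_fun hdiag (X v)

lemma finrank_le_finrank_of_ker_le_ker {K V W W' : Type*} [Field K] [AddCommGroup V] [Module K V]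
    [AddCommGroup W] [Module K W] [FiniteDimensional K W] [AddCommGroup W'] [Module K W']
    {f : V →ₗ[K] W} {g : V →ₗ[K] W'} (hg : Function.Surjective g)
    (h : LinearMap.ker f ≤ LinearMap.ker g) : Module.finrank K W' ≤ Module.finrank K W := by
  have : Module.Finite K (V ⧸ LinearMap.ker f) := .equiv f.quotKerEquivRange.symm
  calc Module.finrank K W' = Module.finrank K (V ⧸ LinearMap.ker g) :=
        (g.quotKerEquivOfSurjective hg).finrank_eq.symm
    _ ≤ Module.finrank K (V ⧸ LinearMap.ker f) :=
        LinearMap.finrank_le_finrank_of_surjective (Submodule.factor_surjective h)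
    _ = Module.finrank K (LinearMap.range f) := f.quotKerEquivRange.finrank_eq
    _ ≤ Module.finrank K W := Submodule.finrank_le _

/-! ### Similarities of direct sums of multiplication operators -/

lemma isOpen_unitDisk : IsOpen unitDisk := Metric.isOpen_ball

lemma zero_mem_unitDisk : (0 : ℂ) ∈ unitDisk := Metric.mem_ball_self one_pos

lemma eqOn_const_of_forall_norm_le {ψ : ℂ → ℂ} (hψ : DifferentiableOn ℂ ψ unitDisk) {z : ℂ}
    (hz : z ∈ unitDisk) (h : ∀ y ∈ unitDisk, ‖ψ y‖ ≤ ‖ψ z‖) :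
    Set.EqOn ψ (Function.const ℂ (ψ z)) unitDisk :=
  eqOn_of_isPreconnected_of_isMaxOn_norm (convex_ball 0 1).isPreconnected isOpen_unitDisk hψ hz h

namespace IsRegularWeight

variable {β : ℕ → ℝ} {ι κ : Type*} {X : (ι → H2) ≃L[ℂ] (κ → H2)} {S Tz : H2 →L[ℂ] H2}

/-- The vector `v` is divisible by `M_z - ψ z`, hence `X v` is divisible by `S - ψ z`. -/
lemma repFun_eq_zero_of_intertwining (hβ : IsRegularWeight β) (hTz : RepMul β (fun z => z) Tz)
    (hS : S ∈ commutant Tz) (hX : ∀ v, X (diagCLM ι Tz v) = diagCLM κ S (X v)) {z : ℂ}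
    (hz : z ∈ unitDisk) {v : ι → H2} (hv : ∀ i, ∃ b, Tz b - symbol β S z • b = v i) (k : κ) :
    repFun β (X v k) z = 0 := by
  choose b hb using hv
  have hvb : v = diagCLM ι Tz b - symbol β S z • b := funext fun i => (hb i).symm
  rw [hvb, map_sub, map_smul, hX]
  exact ((hβ.repMul_symbol hTz hS).repFun_sub_smul hβ hz _ _).trans (by rw [sub_self, zero_mul])

variable [Nonempty κ]

lemma norm_symbol_le_one_of_intertwining (hβ : IsRegularWeight β)
    (hTz : RepMul β (fun z => z) Tz) (hS : S ∈ commutant Tz)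
    (hX : ∀ v, X (diagCLM ι Tz v) = diagCLM κ S (X v)) {z : ℂ} (hz : z ∈ unitDisk) :
    ‖symbol β S z‖ ≤ 1 := by
  by_contra! hlt
  have hzero := hβ.repFun_eq_zero_of_intertwining hTz hS hX hz
    (v := X.symm fun _ => constOne β)
    (fun i => hβ.surjective_mul_sub_smul_of_one_lt_norm hTz hlt _) (Classical.arbitrary κ)
  rw [X.apply_symm_apply, hβ.repFun_constOne] at hzero
  exact one_ne_zero hzero

lemma mapsTo_symbol_of_intertwining [Nonempty ι] (hβ : IsRegularWeight β)
    (hTz : RepMul β (fun z => z) Tz) (hS : S ∈ commutant Tz)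
    (hX : ∀ v, X (diagCLM ι Tz v) = diagCLM κ S (X v)) :
    Set.MapsTo (symbol β S) unitDisk unitDisk := by
  have hle : ∀ y ∈ unitDisk, ‖symbol β S y‖ ≤ 1 := fun y hy =>
    hβ.norm_symbol_le_one_of_intertwining hTz hS hX hy
  intro z hz
  refine mem_unitDisk.2 ((hle z hz).lt_of_ne fun hone => ?_)
  set c := symbol β S z
  have hconst := eqOn_const_of_forall_norm_le (hβ.differentiableOn_repFun (S (constOne β))) hz
    fun y hy => (hle y hy).trans_eq hone.symm
  have hS_eq : ∀ a, S a = c • a := fun a => by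
    refine sub_eq_zero.1 (hβ.ext_repFun fun y hy => ?_)
    rw [(hβ.repMul_symbol hTz hS).repFun_sub_smul hβ hy, symbol, hconst hy]
    simp [c, repFun, symbol]
  have hTz_eq : ∀ a, Tz a = c • a := fun a => by
    have hXa : X (diagCLM ι Tz fun _ => a) = X (c • fun _ => a) := by
      rw [hX, map_smul]
      exact funext fun k => hS_eq _
    exact congrFun (X.injective hXa) (Classical.arbitrary ι)
  have hid : ∀ y ∈ unitDisk, y = c := fun y hy => by
    have := hTz.repFun_sub_smul hβ hy (constOne β) c
    rw [hTz_eq, sub_self, hβ.repFun_constOne, mul_one] at this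
    simpa [repFun, sub_eq_zero, eq_comm] using this
  have hhalf : (1 / 2 : ℂ) ∈ unitDisk := by rw [mem_unitDisk]; norm_num
  exact absurd ((hid _ hhalf).trans (hid 0 zero_mem_unitDisk).symm) (by norm_num)

lemma symbol_eq_symbol_comp_of_intertwining [Nonempty ι] (hβ : IsRegularWeight β)
    (hTz : RepMul β (fun z => z) Tz) (hS : S ∈ commutant Tz)
    (hX : ∀ v, X (diagCLM ι Tz v) = diagCLM κ S (X v)) {T T' : H2 →L[ℂ] H2}
    (hT : T ∈ commutant Tz) (hT' : T' ∈ commutant Tz)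
    (hXT : ∀ v, X (diagCLM ι T v) = diagCLM κ T' (X v)) {z : ℂ} (hz : z ∈ unitDisk) :
    symbol β T' z = symbol β T (symbol β S z) := by
  set μ := symbol β S z
  have hμ : μ ∈ unitDisk := hβ.mapsTo_symbol_of_intertwining hTz hS hX hz
  set v := X.symm fun _ => constOne β
  have hdvd : ∀ i, ∃ b, Tz b - μ • b = (diagCLM ι T v - symbol β T μ • v) i := fun i =>
    hβ.exists_mul_sub_smul_eq_of_repFun_eq_zero hTz hμ <| by
      have := (hβ.repMul_symbol hTz hT).repFun_sub_smul hβ hμ (v i) (symbol β T μ)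
      rwa [sub_self, zero_mul] at this
  have hzero := hβ.repFun_eq_zero_of_intertwining hTz hS hX hz hdvd (Classical.arbitrary κ)
  rw [map_sub, map_smul, hXT, X.apply_symm_apply] at hzero
  have := (hβ.repMul_symbol hTz hT').repFun_sub_smul hβ hz (constOne β) (symbol β T μ)
  rw [hβ.repFun_constOne, mul_one] at this
  exact sub_eq_zero.1 (this.symm.trans hzero)

/-- Through `X`, the fibre of `κ → H²_β` at `0` is a quotient of the fibre of `ι → H²_β` at
`symbol β S 0`. -/
lemma card_le_card_of_intertwining [Fintype ι] [Fintype κ] [Nonempty ι] (hβ : IsRegularWeight β)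
    (hTz : RepMul β (fun z => z) Tz) (hS : S ∈ commutant Tz)
    (hX : ∀ v, X (diagCLM ι Tz v) = diagCLM κ S (X v)) : Fintype.card κ ≤ Fintype.card ι := by
  have h₀ := zero_mem_unitDisk
  have hμ := hβ.mapsTo_symbol_of_intertwining hTz hS hX h₀
  let f : (ι → H2) →L[ℂ] (ι → ℂ) := .piMap fun _ => hβ.evalCLM hμ
  let g : (ι → H2) →L[ℂ] (κ → ℂ) := .piMap (fun _ => hβ.evalCLM h₀) ∘L X
  have hg : Function.Surjective g := fun c => by
    refine ⟨X.symm fun k => c k • constOne β, funext fun k => ?_⟩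
    change hβ.evalCLM h₀ (X (X.symm fun k => c k • constOne β) k) = c k
    rw [X.apply_symm_apply, map_smul, hβ.evalCLM_apply, hβ.repFun_constOne, smul_eq_mul, mul_one]
  have hker : f.ker ≤ g.ker := fun v hv => funext fun k => by
    have hvi : ∀ i, repFun β (v i) (symbol β S 0) = 0 := fun i => by
      rw [← hβ.evalCLM_apply hμ]
      exact congrFun hv i
    exact (hβ.evalCLM_apply h₀ _).trans <| hβ.repFun_eq_zero_of_intertwining hTz hS hX h₀
      (fun i => hβ.exists_mul_sub_smul_eq_of_repFun_eq_zero hTz hμ (hvi i)) k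
  simpa using finrank_le_finrank_of_ker_le_ker hg hker

end IsRegularWeight

/-! ### Automorphisms of the disk -/

lemma one_sub_conj_mul_ne_zero {z₀ z : ℂ} (hz₀ : z₀ ∈ unitDisk) (hz : z ∈ unitDisk) :
    1 - (starRingEnd ℂ) z₀ * z ≠ 0 := fun h => by
  have hone : ‖z₀‖ * ‖z‖ = 1 := by
    rw [← RCLike.norm_conj z₀, ← norm_mul, ← sub_eq_zero.1 h, norm_one]
  exact (mul_lt_one_of_nonneg_of_lt_one_left (norm_nonneg _) (mem_unitDisk.1 hz₀)
    (mem_unitDisk.1 hz).le).ne hone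

lemma mapsTo_mobius {z₀ : ℂ} (hz₀ : z₀ ∈ unitDisk) :
    Set.MapsTo (mobius z₀) unitDisk unitDisk := fun z hz => by
  have h₀ : 0 < 1 - normSq z₀ := by
    rw [normSq_eq_norm_sq, sub_pos, sq_lt_one_iff₀ (norm_nonneg _)]
    exact mem_unitDisk.1 hz₀
  have h₁ : 0 < 1 - normSq z := by
    rw [normSq_eq_norm_sq, sub_pos, sq_lt_one_iff₀ (norm_nonneg _)]
    exact mem_unitDisk.1 hz
  have hident : normSq (1 - (starRingEnd ℂ) z₀ * z) - normSq (z₀ - z) =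
      (1 - normSq z₀) * (1 - normSq z) := by
    simp only [normSq_apply, sub_re, sub_im, mul_re, mul_im, one_re, one_im, conj_re, conj_im]
    ring
  rw [mem_unitDisk, mobius, norm_div,
    div_lt_one (norm_pos_iff.2 (one_sub_conj_mul_ne_zero hz₀ hz)),
    ← sq_lt_sq₀ (norm_nonneg _) (norm_nonneg _), ← normSq_eq_norm_sq, ← normSq_eq_norm_sq,
    ← sub_pos, hident]
  exact mul_pos h₀ h₁

lemma mobius_mobius {z₀ z : ℂ} (hz₀ : z₀ ∈ unitDisk) (hz : z ∈ unitDisk) :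
    mobius z₀ (mobius z₀ z) = z := by
  have hmul : mobius z₀ z * (1 - (starRingEnd ℂ) z₀ * z) = z₀ - z :=
    div_mul_cancel₀ _ (one_sub_conj_mul_ne_zero hz₀ hz)
  rw [mobius, div_eq_iff (one_sub_conj_mul_ne_zero hz₀ (mapsTo_mobius hz₀ hz))]
  linear_combination -hmul

lemma mobius_zero_right (z₀ : ℂ) : mobius z₀ 0 = z₀ := by simp [mobius]

lemma differentiableOn_mobius {z₀ : ℂ} (hz₀ : z₀ ∈ unitDisk) :
    DifferentiableOn ℂ (mobius z₀) unitDisk := fun z hz => by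
  have := one_sub_conj_mul_ne_zero hz₀ hz
  unfold mobius
  exact DifferentiableAt.differentiableWithinAt (by fun_prop (disch := assumption))

lemma exists_eqOn_const_mul_of_leftInvOn {g k : ℂ → ℂ} (hg : DifferentiableOn ℂ g unitDisk)
    (hk : DifferentiableOn ℂ k unitDisk) (hg_maps : Set.MapsTo g unitDisk unitDisk)
    (hk_maps : Set.MapsTo k unitDisk unitDisk) (hkg : Set.LeftInvOn k g unitDisk)
    (hg₀ : g 0 = 0) : ∃ θ : ℝ, Set.EqOn g (fun z => exp (θ * I) * z) unitDisk := by
  have hk₀ : k 0 = 0 := by simpa only [hg₀] using hkg zero_mem_unitDisk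
  have hnorm : ∀ z ∈ unitDisk, ‖g z‖ = ‖z‖ := fun z hz => by
    refine le_antisymm (norm_le_norm_of_mapsTo_ball hg
      (hg_maps.mono_right Metric.ball_subset_closedBall) hg₀ (mem_unitDisk.1 hz)) ?_
    simpa only [hkg hz] using norm_le_norm_of_mapsTo_ball hk
      (hk_maps.mono_right Metric.ball_subset_closedBall) hk₀ (mem_unitDisk.1 (hg_maps hz))
  have hhalf : (1 / 2 : ℂ) ∈ unitDisk := by rw [mem_unitDisk]; norm_num
  have hslope : ‖dslope g 0 (1 / 2)‖ = 1 / 1 := by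
    rw [dslope_of_ne _ (by norm_num), slope_def_field, hg₀, norm_div, sub_zero, sub_zero,
      hnorm _ hhalf]
    norm_num
  obtain ⟨u, hu, hgu⟩ := affine_of_mapsTo_ball_of_exists_norm_dslope_eq_div' hg
    (by rw [hg₀]; exact hg_maps.mono_right Metric.ball_subset_closedBall) ⟨1 / 2, hhalf, hslope⟩
  obtain ⟨θ, hθ⟩ := (norm_eq_one_iff u).1 (hu.trans (div_one 1))
  refine ⟨θ, fun z hz => (hgu hz).trans ?_⟩
  rw [hθ]
  simp [hg₀, mul_comm]

lemma exists_isDiskAut_eqOn {ψ η : ℂ → ℂ} (hψ : DifferentiableOn ℂ ψ unitDisk)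
    (hη : DifferentiableOn ℂ η unitDisk) (hψ_maps : Set.MapsTo ψ unitDisk unitDisk)
    (hη_maps : Set.MapsTo η unitDisk unitDisk) (hinv : Set.InvOn η ψ unitDisk unitDisk) :
    ∃ φ, IsDiskAut φ ∧ Set.EqOn ψ φ unitDisk := by
  set z₀ := η 0
  have hz₀ : z₀ ∈ unitDisk := hη_maps zero_mem_unitDisk
  have hmob := mapsTo_mobius hz₀
  obtain ⟨θ, hθ⟩ := exists_eqOn_const_mul_of_leftInvOn (g := ψ ∘ mobius z₀) (k := mobius z₀ ∘ η)
    (hψ.comp (differentiableOn_mobius hz₀) hmob) ((differentiableOn_mobius hz₀).comp hη hη_maps)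
    (hψ_maps.comp hmob) (hmob.comp hη_maps)
    (fun z hz => by simp only [Function.comp_apply, hinv.1 (hmob hz), mobius_mobius hz₀ hz])
    (by simpa only [Function.comp_apply, mobius_zero_right] using hinv.2 zero_mem_unitDisk)
  refine ⟨fun z => exp (θ * I) * mobius z₀ z, ⟨θ, z₀, hz₀, fun _ => rfl⟩, fun z hz => ?_⟩
  simpa only [Function.comp_apply, mobius_mobius hz₀ hz] using hθ (hmob hz)

/-! ### Similar direct sums have the same multiplicity -/

section Similarity

variable {β : ℕ → ℝ} {ι κ : Type*} {X : (ι → H2) ≃L[ℂ] (κ → H2)}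

lemma symm_intertwining {A B : H2 →L[ℂ] H2}
    (h : ∀ v, X (diagCLM ι A v) = diagCLM κ B (X v)) (v : κ → H2) :
    X.symm (diagCLM κ B v) = diagCLM ι A (X.symm v) :=
  Function.Semiconj.inverse_left h X.symm_apply_apply X.apply_symm_apply v

lemma exists_mem_commutant_intertwining [Finite ι] [Nonempty κ] {T₁ T₂ Tz : H2 →L[ℂ] H2}
    (hc₁ : commutant T₁ ⊆ commutant Tz) (hc₂ : commutant T₂ ⊆ commutant Tz)
    (hX : ∀ v, X (diagCLM ι T₁ v) = diagCLM κ T₂ (X v)) :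
    ∃ S ∈ commutant Tz, ∀ v, X (diagCLM ι Tz v) = diagCLM κ S (X v) := by
  obtain ⟨S, hS, hXS⟩ := exists_intertwined_of_commute_of_commute X hX fun _ hR => hc₁ hR
  exact ⟨S, hc₂ (hS T₂ (Commute.refl T₂)).symm, hXS⟩

lemma IsRegularWeight.leftInvOn_symbol_of_intertwining [Nonempty ι] [Nonempty κ]
    (hβ : IsRegularWeight β) {R S Tz : H2 →L[ℂ] H2} (hTz : RepMul β (fun z => z) Tz)
    (hS : S ∈ commutant Tz) (hXS : ∀ v, X (diagCLM ι Tz v) = diagCLM κ S (X v))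
    (hR : R ∈ commutant Tz) (hXR : ∀ v, X (diagCLM ι R v) = diagCLM κ Tz (X v)) :
    Set.LeftInvOn (symbol β R) (symbol β S) unitDisk := fun z hz => by
  have hTz_mem : Tz ∈ commutant Tz := rfl
  rw [← hβ.symbol_eq_symbol_comp_of_intertwining hTz hS hXS hR hTz_mem hXR hz,
    hβ.symbol_eq_of_repMul hTz hz]

lemma IsRegularWeight.exists_isDiskAut_of_similar [Fintype ι] [Fintype κ] [Nonempty ι] [Nonempty κ]
    (hβ : IsRegularWeight β) {h₁ h₂ : ℂ → ℂ} {T₁ T₂ Tz : H2 →L[ℂ] H2} (hT₁ : RepMul β h₁ T₁)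
    (hT₂ : RepMul β h₂ T₂) (hTz : RepMul β (fun z => z) Tz) (hc₁ : commutant T₁ = commutant Tz)
    (hc₂ : commutant T₂ = commutant Tz) (hX : ∀ v, X (diagCLM ι T₁ v) = diagCLM κ T₂ (X v)) :
    Fintype.card ι = Fintype.card κ ∧
      ∃ φ, IsDiskAut φ ∧ ∀ z ∈ unitDisk, h₂ z = h₁ (φ z) := by
  obtain ⟨S, hS, hXS⟩ := exists_mem_commutant_intertwining hc₁.subset hc₂.subset hX
  obtain ⟨R, hR, hXR⟩ :=
    exists_mem_commutant_intertwining hc₂.subset hc₁.subset (symm_intertwining hX)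
  have hS_maps := hβ.mapsTo_symbol_of_intertwining hTz hS hXS
  obtain ⟨φ, hφ, hSφ⟩ := exists_isDiskAut_eqOn (hβ.differentiableOn_repFun (S (constOne β)))
    (hβ.differentiableOn_repFun (R (constOne β))) hS_maps
    (hβ.mapsTo_symbol_of_intertwining hTz hR hXR)
    ⟨hβ.leftInvOn_symbol_of_intertwining hTz hS hXS hR (symm_intertwining hXR),
      hβ.leftInvOn_symbol_of_intertwining hTz hR hXR hS (symm_intertwining hXS)⟩
  refine ⟨le_antisymm (hβ.card_le_card_of_intertwining hTz hR hXR)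
    (hβ.card_le_card_of_intertwining hTz hS hXS), φ, hφ, fun z hz => ?_⟩
  have hT₁_mem : T₁ ∈ commutant Tz := hc₁.subset rfl
  have hT₂_mem : T₂ ∈ commutant Tz := hc₂.subset rfl
  calc h₂ z = symbol β T₂ z := (hβ.symbol_eq_of_repMul hT₂ hz).symm
    _ = symbol β T₁ (symbol β S z) :=
      hβ.symbol_eq_symbol_comp_of_intertwining hTz hS hXS hT₁_mem hT₂_mem hX hz
    _ = h₁ (symbol β S z) := hβ.symbol_eq_of_repMul hT₁ (hS_maps hz)
    _ = h₁ (φ z) := congrArg h₁ (hSφ hz)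

end Similarity

/-! ### Taylor coefficients of the powers of a Möbius factor -/

/-- The `k`-th Taylor coefficient of `mobius r ^ j` for real `r`, computed by comparing coefficients
in `(1 - r z) mobius r z ^ (j + 1) = (r - z) mobius r z ^ j`. -/
def mobiusCoeff (r : ℝ) : ℕ → ℕ → ℝ
  | 0, 0 => 1
  | 0, _ + 1 => 0
  | j + 1, 0 => r * mobiusCoeff r j 0
  | j + 1, k + 1 => r * mobiusCoeff r j (k + 1) - mobiusCoeff r j k + r * mobiusCoeff r (j + 1) k

lemma mobiusCoeff_zero_zero (r : ℝ) : mobiusCoeff r 0 0 = 1 := by rw [mobiusCoeff]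

lemma mobiusCoeff_zero_succ (r : ℝ) (k : ℕ) : mobiusCoeff r 0 (k + 1) = 0 := by rw [mobiusCoeff]

lemma mobiusCoeff_succ_zero (r : ℝ) (j : ℕ) : mobiusCoeff r (j + 1) 0 = r * mobiusCoeff r j 0 := by
  rw [mobiusCoeff]

lemma mobiusCoeff_succ_succ (r : ℝ) (j k : ℕ) : mobiusCoeff r (j + 1) (k + 1) =
    r * mobiusCoeff r j (k + 1) - mobiusCoeff r j k + r * mobiusCoeff r (j + 1) k := by
  rw [mobiusCoeff]

lemma mobiusCoeff_zero_left (j k : ℕ) : mobiusCoeff 0 j k = if j = k then (-1) ^ j else 0 := by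
  induction j generalizing k with
  | zero => cases k <;> simp [mobiusCoeff_zero_zero, mobiusCoeff_zero_succ]
  | succ j ih =>
    cases k with
    | zero => simp [mobiusCoeff_succ_zero]
    | succ k =>
      simp only [mobiusCoeff_succ_succ, ih, zero_mul, zero_sub, add_zero, add_left_inj, pow_succ]
      split_ifs <;> simp

lemma abs_mobiusCoeff_succ_succ_le (r : ℝ) (j k : ℕ) : |mobiusCoeff r (j + 1) (k + 1)| ≤
    |r| * |mobiusCoeff r j (k + 1)| + |mobiusCoeff r j k| + |r| * |mobiusCoeff r (j + 1) k| := by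
  rw [mobiusCoeff_succ_succ, ← abs_mul, ← abs_mul]
  exact (abs_add_le _ _).trans (by gcongr; exact abs_sub _ _)

lemma exists_abs_mobiusCoeff_le {r₀ ρ : ℝ} (hr₀ : 0 ≤ r₀) (hr₀ρ : r₀ < ρ) (hρ : ρ < 1) (j : ℕ) :
    ∃ K, 0 ≤ K ∧ ∀ r, |r| ≤ r₀ → ∀ k, |mobiusCoeff r j k| ≤ K * ρ ^ k := by
  have hρ₀ : 0 < ρ := hr₀.trans_lt hr₀ρ
  induction j with
  | zero =>
    refine ⟨1, zero_le_one, fun r _ k => ?_⟩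
    cases k with
    | zero => simp [mobiusCoeff_zero_zero]
    | succ k => rw [mobiusCoeff_zero_succ, abs_zero]; positivity
  | succ j ih =>
    obtain ⟨K, hK, hKbound⟩ := ih
    have hgap : 0 < ρ - r₀ := sub_pos.2 hr₀ρ
    obtain ⟨K', hK', hK'_eq⟩ : ∃ K', 0 ≤ K' ∧ K' * (ρ - r₀) = 2 * K :=
      ⟨2 * K / (ρ - r₀), by positivity, div_mul_cancel₀ _ hgap.ne'⟩
    refine ⟨K', hK', fun r hr k => ?_⟩
    induction k with
    | zero =>
      have h₀ : |mobiusCoeff r j 0| ≤ K := by simpa using hKbound r hr 0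
      rw [mobiusCoeff_succ_zero, abs_mul, pow_zero, mul_one]
      nlinarith [mul_le_mul hr h₀ (abs_nonneg _) hr₀]
    | succ k ihk =>
      have h₁ : |mobiusCoeff r j (k + 1)| ≤ K * ρ ^ k := (hKbound r hr _).trans <|
        mul_le_mul_of_nonneg_left (pow_le_pow_of_le_one hρ₀.le hρ.le k.le_succ) hK
      have hr₁ : |r| ≤ 1 := by linarith
      calc |mobiusCoeff r (j + 1) (k + 1)|
          ≤ |r| * |mobiusCoeff r j (k + 1)| + |mobiusCoeff r j k|
            + |r| * |mobiusCoeff r (j + 1) k| := abs_mobiusCoeff_succ_succ_le r j k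
        _ ≤ 1 * (K * ρ ^ k) + K * ρ ^ k + r₀ * (K' * ρ ^ k) := by gcongr; exact hKbound r hr k
        _ = (2 * K + r₀ * K') * ρ ^ k := by ring
        _ = K' * ρ ^ (k + 1) := by rw [← hK'_eq]; ring

lemma ofReal_mem_unitDisk {r : ℝ} : (r : ℂ) ∈ unitDisk ↔ |r| < 1 := by
  rw [mem_unitDisk, norm_real, Real.norm_eq_abs]

lemma summable_mobiusCoeff {r : ℝ} (hr : |r| < 1) {z : ℂ} (hz : z ∈ unitDisk) (j : ℕ) :
    Summable fun k => (mobiusCoeff r j k : ℂ) * z ^ k := by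
  obtain ⟨ρ, hrρ, hρ⟩ := exists_between hr
  obtain ⟨K, hK, hbound⟩ := exists_abs_mobiusCoeff_le (abs_nonneg r) hrρ hρ j
  refine .of_norm_bounded ((summable_geometric_of_lt_one (norm_nonneg z)
    (mem_unitDisk.1 hz)).mul_left K) fun k => ?_
  rw [norm_mul, norm_pow, norm_real, Real.norm_eq_abs]
  gcongr
  exact (hbound r le_rfl k).trans
    (mul_le_of_le_one_right hK (pow_le_one₀ ((abs_nonneg r).trans hrρ.le) hρ.le))

lemma hasSum_mobiusCoeff {r : ℝ} (hr : |r| < 1) {z : ℂ} (hz : z ∈ unitDisk) (j : ℕ) :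
    HasSum (fun k => (mobiusCoeff r j k : ℂ) * z ^ k) (mobius r z ^ j) := by
  induction j with
  | zero =>
    have := hasSum_single (f := fun k => (mobiusCoeff r 0 k : ℂ) * z ^ k) 0 fun k hk => by
      obtain ⟨k, rfl⟩ := Nat.exists_eq_succ_of_ne_zero hk
      simp [mobiusCoeff_zero_succ]
    simpa [mobiusCoeff_zero_zero] using this
  | succ j ih =>
    have hden := one_sub_conj_mul_ne_zero (ofReal_mem_unitDisk.2 hr) hz
    rw [conj_ofReal] at hden
    have hshift := (hasSum_nat_add_iff' 1).2 ih
    have hsum := (summable_mobiusCoeff hr hz (j + 1)).hasSum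
    have htail := (hasSum_nat_add_iff' 1).2 hsum
    set σ := ∑' k, (mobiusCoeff r (j + 1) k : ℂ) * z ^ k
    have hrec := htail.unique <|
      (((hshift.mul_left (r : ℂ)).sub (ih.mul_left z)).add
        (hsum.mul_left (r * z))).congr_fun fun k => by
          rw [mobiusCoeff_succ_succ]; push_cast; ring
    simp only [Finset.range_one, Finset.sum_singleton, mobiusCoeff_succ_zero, pow_zero,
      mul_one, ofReal_mul] at hrec
    have hσ : σ = mobius r z ^ (j + 1) := by
      rw [pow_succ, mobius, conj_ofReal, mul_div_assoc', eq_div_iff hden]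
      rw [mobius, conj_ofReal] at hrec
      linear_combination hrec
    exact hσ ▸ hsum

/-- The coefficient sequence of `(1 - z²) f'`, where `x` is that of `f`. -/
def transportDeriv {V : Type*} [AddCommGroup V] [Module ℝ V] (x : ℕ → V) : ℕ → V
  | 0 => x 1
  | k + 1 => ((k : ℝ) + 2) • x (k + 2) - (k : ℝ) • x k

/-- The transport equation `(1 - r²) ∂ᵣ (mobius r z) = -(1 - z²) ∂_z (mobius r z)`. -/
lemma hasDerivAt_mobiusCoeff {r : ℝ} (hr : 1 - r ^ 2 ≠ 0) (j k : ℕ) :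
    HasDerivAt (fun r => mobiusCoeff r j k)
      (-(1 - r ^ 2)⁻¹ * transportDeriv (mobiusCoeff r j) k) r := by
  induction j generalizing k with
  | zero =>
    have hconst : transportDeriv (mobiusCoeff r 0) k = 0 := by
      match k with
      | 0 | 1 | k + 2 => simp [transportDeriv, mobiusCoeff_zero_succ]
    rw [hconst, mul_zero]
    cases k with
    | zero => simpa only [mobiusCoeff_zero_zero] using hasDerivAt_const r (1 : ℝ)
    | succ k => simpa only [mobiusCoeff_zero_succ] using hasDerivAt_const r (0 : ℝ)
  | succ j ihj =>
    induction k with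
    | zero =>
      simp only [mobiusCoeff_succ_zero]
      refine ((hasDerivAt_id r).mul (ihj 0)).congr_deriv ?_
      simp only [transportDeriv, mobiusCoeff_succ_succ, mobiusCoeff_succ_zero, id]
      field_simp
      ring
    | succ k ihk =>
      simp only [mobiusCoeff_succ_succ]
      refine ((((hasDerivAt_id r).mul (ihj (k + 1))).sub (ihj k)).add
        ((hasDerivAt_id r).mul ihk)).congr_deriv ?_
      cases k <;>
      · simp only [transportDeriv, mobiusCoeff_succ_succ, mobiusCoeff_succ_zero, id, smul_eq_mul]
        field_simp
        push_cast
        ring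

/-! ### Weighted energy estimates along the transport flow -/

lemma sum_add_succ_le_two_mul_sum {f : ℕ → ℝ} (hf : ∀ k, 0 ≤ f k) (n : ℕ) :
    ∑ k ∈ Finset.range n, (f k + f (k + 1)) ≤ 2 * ∑ k ∈ Finset.range (n + 1), f k := by
  rw [Finset.sum_add_distrib, two_mul]
  refine add_le_add (Finset.sum_le_sum_of_subset_of_nonneg (Finset.range_mono n.le_succ)
    fun k _ _ => hf k) ?_
  rw [Finset.sum_range_succ']
  exact le_add_of_nonneg_right (hf 0)

section Energy

variable {V : Type*} [NormedAddCommGroup V] [InnerProductSpace ℝ V]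

lemma sum_inner_transportDeriv (b : ℕ → ℝ) (x : ℕ → V) (n : ℕ) :
    ∑ k ∈ Finset.range (n + 1), b k * inner ℝ (x k) (transportDeriv x k) =
      ∑ k ∈ Finset.range n, (b k * (k + 1) - b (k + 1) * k) * inner ℝ (x k) (x (k + 1))
        + b n * (n + 1) * inner ℝ (x n) (x (n + 1)) := by
  induction n with
  | zero => simp [transportDeriv]
  | succ n ih =>
    rw [Finset.sum_range_succ, ih, Finset.sum_range_succ, transportDeriv, inner_sub_right,
      real_inner_smul_right, real_inner_smul_right, real_inner_comm (x n)]
    push_cast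
    ring

lemma abs_mul_inner_le {c A b₁ b₂ : ℝ} (hA : 0 ≤ A) (hb₁ : 0 ≤ b₁) (hb₂ : 0 ≤ b₂)
    (hc : |c| ≤ A * min b₁ b₂) (x y : V) :
    |c * inner ℝ x y| ≤ A / 2 * (b₁ * ‖x‖ ^ 2 + b₂ * ‖y‖ ^ 2) := by
  have : 0 ≤ min b₁ b₂ := le_min hb₁ hb₂
  calc |c * inner ℝ x y| ≤ A * min b₁ b₂ * (‖x‖ * ‖y‖) := by
        rw [abs_mul]
        gcongr
        exact abs_real_inner_le_norm _ _
    _ ≤ A * min b₁ b₂ * ((‖x‖ ^ 2 + ‖y‖ ^ 2) / 2) := by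
        gcongr
        linarith [two_mul_le_add_sq ‖x‖ ‖y‖]
    _ = A / 2 * (min b₁ b₂ * ‖x‖ ^ 2 + min b₁ b₂ * ‖y‖ ^ 2) := by ring
    _ ≤ A / 2 * (b₁ * ‖x‖ ^ 2 + b₂ * ‖y‖ ^ 2) := by
        gcongr
        exacts [min_le_left _ _, min_le_right _ _]

variable {b : ℕ → ℝ} {A : ℝ}

lemma abs_sum_inner_transportDeriv_le (hb : ∀ k, 0 ≤ b k) (hA : 0 ≤ A)
    (hbA : ∀ k : ℕ, |b k * (k + 1) - b (k + 1) * k| ≤ A * min (b k) (b (k + 1)))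
    (x : ℕ → V) (n : ℕ) :
    |∑ k ∈ Finset.range (n + 1), b k * inner ℝ (x k) (transportDeriv x k)| ≤
      A * ∑ k ∈ Finset.range (n + 1), b k * ‖x k‖ ^ 2
        + b n * (n + 1) * (‖x n‖ * ‖x (n + 1)‖) := by
  rw [sum_inner_transportDeriv]
  refine (abs_add_le _ _).trans (add_le_add ?_ ?_)
  · calc _ ≤ ∑ k ∈ Finset.range n, A / 2 * (b k * ‖x k‖ ^ 2 + b (k + 1) * ‖x (k + 1)‖ ^ 2) :=
          (Finset.abs_sum_le_sum_abs _ _).trans <| Finset.sum_le_sum fun k _ =>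
            abs_mul_inner_le hA (hb k) (hb (k + 1)) (hbA k) _ _
      _ ≤ A / 2 * (2 * ∑ k ∈ Finset.range (n + 1), b k * ‖x k‖ ^ 2) := by
          rw [← Finset.mul_sum]
          gcongr
          exact sum_add_succ_le_two_mul_sum (fun k => mul_nonneg (hb k) (sq_nonneg ‖x k‖)) n
      _ = A * ∑ k ∈ Finset.range (n + 1), b k * ‖x k‖ ^ 2 := by ring
  · have hbn : 0 ≤ b n * (n + 1) := mul_nonneg (hb n) (by positivity)
    rw [abs_mul, abs_of_nonneg hbn]
    gcongr
    exact abs_real_inner_le_norm _ _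

variable {a Q δ : ℝ} {x : ℝ → ℕ → V} {q : ℝ → ℝ}

lemma hasDerivAt_sum_mul_norm_sq_of_transport {r : ℝ}
    (hx : ∀ k, HasDerivAt (fun r => x r k) (q r • transportDeriv (x r) k) r) (n : ℕ) :
    HasDerivAt (fun r => ∑ k ∈ Finset.range n, b k * ‖x r k‖ ^ 2)
      (2 * q r * ∑ k ∈ Finset.range n, b k * inner ℝ (x r k) (transportDeriv (x r) k)) r := by
  refine (HasDerivAt.fun_sum fun k _ => (hx k).norm_sq.const_mul (b k)).congr_deriv ?_
  rw [Finset.mul_sum]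
  refine Finset.sum_congr rfl fun k _ => ?_
  rw [real_inner_smul_right]
  ring

lemma sum_norm_sq_le_gronwallBound_of_transport (hb : ∀ k, 0 ≤ b k) (hA : 0 ≤ A)
    (hbA : ∀ k : ℕ, |b k * (k + 1) - b (k + 1) * k| ≤ A * min (b k) (b (k + 1)))
    (ha : 0 ≤ a) (hq : ∀ r ∈ Set.Icc 0 a, |q r| ≤ Q)
    (hx : ∀ r ∈ Set.Icc 0 a, ∀ k, HasDerivAt (fun r => x r k) (q r • transportDeriv (x r) k) r)
    {ε : ℝ} {n : ℕ} (hε : ∀ r ∈ Set.Icc 0 a, b n * (n + 1) * (‖x r n‖ * ‖x r (n + 1)‖) ≤ ε)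
    (hδ : ∑ k ∈ Finset.range (n + 1), b k * ‖x 0 k‖ ^ 2 ≤ δ) :
    ∑ k ∈ Finset.range (n + 1), b k * ‖x a k‖ ^ 2 ≤
      gronwallBound δ (2 * Q * A) (2 * Q * ε) a := by
  have hnonneg : ∀ r, 0 ≤ ∑ k ∈ Finset.range (n + 1), b k * ‖x r k‖ ^ 2 := fun r =>
    Finset.sum_nonneg fun k _ => mul_nonneg (hb k) (sq_nonneg _)
  have hderiv := fun r hr => hasDerivAt_sum_mul_norm_sq_of_transport (b := b) (hx r hr) (n + 1)
  have hgrowth : ∀ r ∈ Set.Ico 0 a, ‖2 * q r *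
      ∑ k ∈ Finset.range (n + 1), b k * inner ℝ (x r k) (transportDeriv (x r) k)‖ ≤
      2 * Q * A * ‖∑ k ∈ Finset.range (n + 1), b k * ‖x r k‖ ^ 2‖ + 2 * Q * ε := fun r hr => by
    have hr' := Set.Ico_subset_Icc_self hr
    rw [norm_mul, norm_mul, Real.norm_ofNat, Real.norm_of_nonneg (hnonneg r)]
    calc _ ≤ 2 * Q * (A * ∑ k ∈ Finset.range (n + 1), b k * ‖x r k‖ ^ 2 + ε) := by
          have hQ : 0 ≤ Q := (abs_nonneg _).trans (hq r hr')
          gcongr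
          · exact hq r hr'
          · exact (abs_sum_inner_transportDeriv_le hb hA hbA _ n).trans (by gcongr; exact hε r hr')
      _ = _ := by ring
  have := norm_le_gronwallBound_of_norm_deriv_right_le
    (fun r hr => (hderiv r hr).continuousAt.continuousWithinAt)
    (fun r hr => (hderiv r (Set.Ico_subset_Icc_self hr)).hasDerivWithinAt)
    ((Real.norm_of_nonneg (hnonneg 0)).trans_le hδ) hgrowth a ⟨ha, le_rfl⟩
  rwa [Real.norm_of_nonneg (hnonneg a), sub_zero] at this

/-- The boundary terms of the truncated energies vanish in the limit. -/
lemma sum_norm_sq_le_mul_exp_of_transport (hb : ∀ k, 0 ≤ b k) (hA : 0 ≤ A)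
    (hbA : ∀ k : ℕ, |b k * (k + 1) - b (k + 1) * k| ≤ A * min (b k) (b (k + 1)))
    (ha : 0 ≤ a) (hq : ∀ r ∈ Set.Icc 0 a, |q r| ≤ Q)
    (hx : ∀ r ∈ Set.Icc 0 a, ∀ k, HasDerivAt (fun r => x r k) (q r • transportDeriv (x r) k) r)
    {ε : ℕ → ℝ} (hε : Tendsto ε atTop (𝓝 0))
    (hxε : ∀ r ∈ Set.Icc 0 a, ∀ n : ℕ, b n * (n + 1) * (‖x r n‖ * ‖x r (n + 1)‖) ≤ ε n)
    (hδ : ∀ n, ∑ k ∈ Finset.range n, b k * ‖x 0 k‖ ^ 2 ≤ δ) (n : ℕ) :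
    ∑ k ∈ Finset.range n, b k * ‖x a k‖ ^ 2 ≤ δ * Real.exp (2 * Q * A * a) := by
  have hlim : Tendsto (fun n => gronwallBound δ (2 * Q * A) (2 * Q * ε n) a) atTop
      (𝓝 (δ * Real.exp (2 * Q * A * a))) := by
    rw [← gronwallBound_ε0]
    refine ((gronwallBound_continuous_ε δ (2 * Q * A) a).tendsto 0).comp ?_
    simpa using hε.const_mul (2 * Q)
  refine ge_of_tendsto hlim (eventually_atTop.2 ⟨n, fun m hm => ?_⟩)
  calc ∑ k ∈ Finset.range n, b k * ‖x a k‖ ^ 2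
      ≤ ∑ k ∈ Finset.range (m + 1), b k * ‖x a k‖ ^ 2 :=
        Finset.sum_le_sum_of_subset_of_nonneg (Finset.range_mono (hm.trans m.le_succ))
          fun k _ _ => mul_nonneg (hb k) (sq_nonneg _)
    _ ≤ gronwallBound δ (2 * Q * A) (2 * Q * ε m) a :=
        sum_norm_sq_le_gronwallBound_of_transport hb hA hbA ha hq hx
          (fun r hr => hxε r hr m) (hδ (m + 1))

end Energy

/-! ### Bounded composition operators -/

lemma IsPolyGrowthWeight.exists_abs_sq_mul_sub_le {β : ℕ → ℝ} (hβ : IsPolyGrowthWeight β) :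
    ∃ A, 0 ≤ A ∧ ∀ k : ℕ, |β k ^ 2 * (k + 1) - β (k + 1) ^ 2 * k| ≤
      A * min (β k ^ 2) (β (k + 1) ^ 2) := by
  obtain ⟨M, hM⟩ := hβ.exists_bound
  obtain ⟨C, hC, hCle⟩ := hβ.isRegularWeight.exists_add_le_mul_pow one_lt_two
  obtain ⟨D, hD, hDle⟩ := hβ.isRegularWeight.inv.exists_add_le_mul_pow one_lt_two
  have hM₀ : 0 ≤ M := (by positivity : (0 : ℝ) ≤ _).trans (hM 0)
  refine ⟨(1 + M * (1 + C * 2)) * (1 + (D * 2) ^ 2), by positivity, fun k => ?_⟩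
  have hpos := hβ.pos k
  have hpos' := hβ.pos (k + 1)
  have hgrow : β (k + 1) ≤ C * 2 * β k := by simpa using hCle k 1
  have hdecay : β k ≤ D * 2 * β (k + 1) := by
    have := hDle k 1
    field_simp at this
    linarith
  have hdiff : k * |β (k + 1) - β k| ≤ M * β k := by
    calc k * |β (k + 1) - β k| ≤ (k + 1) * |β (k + 1) - β k| := by gcongr; simp
      _ = (k + 1) * |β (k + 1) / β k - 1| * β k := by
        rw [div_sub_one hpos.ne', abs_div, abs_of_pos hpos]
        field_simp
      _ ≤ M * β k := by gcongr; exact hM k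
  have hmain : |β k ^ 2 * (k + 1) - β (k + 1) ^ 2 * k| ≤ (1 + M * (1 + C * 2)) * β k ^ 2 := by
    calc |β k ^ 2 * (k + 1) - β (k + 1) ^ 2 * k|
        = |β k ^ 2 - k * (β (k + 1) - β k) * (β k + β (k + 1))| := by ring_nf
      _ ≤ |β k ^ 2| + |k * (β (k + 1) - β k) * (β k + β (k + 1))| := abs_sub _ _
      _ = β k ^ 2 + k * |β (k + 1) - β k| * (β k + β (k + 1)) := by
        rw [abs_mul, abs_mul, Nat.abs_cast, abs_of_pos (add_pos hpos hpos'), abs_sq]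
      _ ≤ β k ^ 2 + M * β k * (β k + C * 2 * β k) := by gcongr
      _ = (1 + M * (1 + C * 2)) * β k ^ 2 := by ring
  refine hmain.trans ?_
  rw [mul_assoc]
  gcongr
  rcases min_choice (β k ^ 2) (β (k + 1) ^ 2) with h | h <;> rw [h]
  · nlinarith [sq_nonneg (D * 2 * β k)]
  · nlinarith [pow_le_pow_left₀ hpos.le hdecay 2, sq_nonneg (β (k + 1))]

lemma IsRegularWeight.exists_tendsto_zero_sq_mul_le {β : ℕ → ℝ} (hβ : IsRegularWeight β) (K : ℝ)
    {ρ : ℝ} (hρ₀ : 0 ≤ ρ) (hρ₁ : ρ < 1) : ∃ ε : ℕ → ℝ, Tendsto ε atTop (𝓝 0) ∧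
      ∀ n : ℕ, β n ^ 2 * (n + 1) * (K * ρ ^ n) ^ 2 ≤ ε n := by
  obtain ⟨C, σ, hσ₀, hσ₁, hC⟩ := hβ.exists_mul_pow_le hρ₀ hρ₁
  have hσ : σ ^ 2 < 1 := pow_lt_one₀ hσ₀ hσ₁ two_ne_zero
  refine ⟨fun n => (K * C) ^ 2 * (n * (σ ^ 2) ^ n + (σ ^ 2) ^ n), ?_, fun n => ?_⟩
  · simpa using ((tendsto_self_mul_const_pow_of_lt_one (sq_nonneg σ) hσ).add
      (tendsto_pow_atTop_nhds_zero_of_lt_one (sq_nonneg σ) hσ)).const_mul ((K * C) ^ 2)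
  · have hpos := hβ.pos n
    calc β n ^ 2 * (n + 1) * (K * ρ ^ n) ^ 2 = K ^ 2 * (n + 1) * (β n * ρ ^ n) ^ 2 := by ring
      _ ≤ K ^ 2 * (n + 1) * (C * σ ^ n) ^ 2 := by
        gcongr K ^ 2 * (n + 1) * ?_ ^ 2
        exact hC n
      _ = (K * C) ^ 2 * (n * (σ ^ 2) ^ n + (σ ^ 2) ^ n) := by ring

section MobiusSum

variable {V : Type*}

/-- The coefficients of `f ∘ mobius r`, where `f` is the polynomial `∑ j ∈ s, α j z ^ j`. -/
def mobiusSum [AddCommGroup V] [Module ℝ V] (s : Finset ℕ) (α : ℕ → V) (r : ℝ) (k : ℕ) : V :=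
  ∑ j ∈ s, mobiusCoeff r j k • α j

lemma transportDeriv_mobiusSum [AddCommGroup V] [Module ℝ V] (s : Finset ℕ) (α : ℕ → V) (r : ℝ)
    (k : ℕ) :
    transportDeriv (mobiusSum s α r) k = ∑ j ∈ s, transportDeriv (mobiusCoeff r j) k • α j := by
  cases k <;> simp only [transportDeriv, mobiusSum, Finset.smul_sum, ← Finset.sum_sub_distrib,
    sub_smul, smul_eq_mul, mul_smul]

variable [NormedAddCommGroup V]

lemma hasDerivAt_mobiusSum [NormedSpace ℝ V] {r : ℝ} (hr : 1 - r ^ 2 ≠ 0) (s : Finset ℕ)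
    (α : ℕ → V) (k : ℕ) : HasDerivAt (fun r => mobiusSum s α r k)
      (-(1 - r ^ 2)⁻¹ • transportDeriv (mobiusSum s α r) k) r := by
  rw [transportDeriv_mobiusSum, Finset.smul_sum]
  simp only [smul_smul]
  exact HasDerivAt.fun_sum fun j _ => (hasDerivAt_mobiusCoeff hr j k).smul_const (α j)

lemma exists_norm_mobiusSum_le [NormedSpace ℝ V] {r₀ ρ : ℝ} (hr₀ : 0 ≤ r₀) (hr₀ρ : r₀ < ρ)
    (hρ : ρ < 1) (s : Finset ℕ) (α : ℕ → V) :
    ∃ K, 0 ≤ K ∧ ∀ r, |r| ≤ r₀ → ∀ k, ‖mobiusSum s α r k‖ ≤ K * ρ ^ k := by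
  choose K hK hle using exists_abs_mobiusCoeff_le hr₀ hr₀ρ hρ
  refine ⟨∑ j ∈ s, K j * ‖α j‖, Finset.sum_nonneg fun j _ => mul_nonneg (hK j) (norm_nonneg _),
    fun r hr k => ?_⟩
  rw [Finset.sum_mul]
  refine norm_sum_le_of_le _ fun j _ => ?_
  rw [norm_smul, Real.norm_eq_abs, mul_right_comm]
  gcongr
  exact hle j r hr k

lemma norm_mobiusSum_zero [NormedSpace ℝ V] (s : Finset ℕ) (α : ℕ → V) (k : ℕ) :
    ‖mobiusSum s α 0 k‖ = if k ∈ s then ‖α k‖ else 0 := by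
  simp only [mobiusSum, mobiusCoeff_zero_left, ite_smul, zero_smul, Finset.sum_ite_eq']
  split_ifs <;> simp [norm_smul]

lemma sum_mul_norm_mobiusSum_zero_le [NormedSpace ℝ V] {b : ℕ → ℝ} (hb : ∀ k, 0 ≤ b k)
    (s : Finset ℕ) (α : ℕ → V) (n : ℕ) :
    ∑ k ∈ Finset.range n, b k * ‖mobiusSum s α 0 k‖ ^ 2 ≤ ∑ k ∈ s, b k * ‖α k‖ ^ 2 := by
  simp only [norm_mobiusSum_zero, ite_pow, mul_ite, zero_pow two_ne_zero, mul_zero,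
    ← Finset.sum_filter]
  exact Finset.sum_le_sum_of_subset_of_nonneg (fun k hk => (Finset.mem_filter.1 hk).2)
    fun k _ _ => mul_nonneg (hb k) (sq_nonneg _)

theorem IsPolyGrowthWeight.exists_sum_mobiusSum_le [InnerProductSpace ℝ V] {β : ℕ → ℝ}
    (hβ : IsPolyGrowthWeight β) {a : ℝ} (ha₀ : 0 ≤ a) (ha₁ : a < 1) :
    ∃ Λ, 0 ≤ Λ ∧ ∀ (s : Finset ℕ) (α : ℕ → V) (n : ℕ),
      ∑ k ∈ Finset.range n, β k ^ 2 * ‖mobiusSum s α a k‖ ^ 2 ≤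
        Λ * ∑ j ∈ s, β j ^ 2 * ‖α j‖ ^ 2 := by
  obtain ⟨A, hA, hβA⟩ := hβ.exists_abs_sq_mul_sub_le
  obtain ⟨ρ, haρ, hρ⟩ := exists_between ha₁
  have hρ₀ : 0 ≤ ρ := ha₀.trans haρ.le
  have hgap : 0 < 1 - a ^ 2 := by nlinarith
  have hgap_le : ∀ r ∈ Set.Icc 0 a, 1 - a ^ 2 ≤ 1 - r ^ 2 := fun r hr =>
    sub_le_sub_left (pow_le_pow_left₀ hr.1 hr.2 2) 1
  refine ⟨Real.exp (2 * (1 - a ^ 2)⁻¹ * A * a), (Real.exp_pos _).le, fun s α n => ?_⟩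
  obtain ⟨K, hK, hle⟩ := exists_norm_mobiusSum_le ha₀ haρ hρ s α
  obtain ⟨ε, hε, hεle⟩ := hβ.isRegularWeight.exists_tendsto_zero_sq_mul_le K hρ₀ hρ
  rw [mul_comm]
  refine sum_norm_sq_le_mul_exp_of_transport (fun k => sq_nonneg _) hA hβA ha₀
    (q := fun r => -(1 - r ^ 2)⁻¹) (fun r hr => ?_)
    (fun r hr => hasDerivAt_mobiusSum (hgap.trans_le (hgap_le r hr)).ne' s α) hε
    (fun r hr n => le_trans ?_ (hεle n))
    (fun n => sum_mul_norm_mobiusSum_zero_le (fun k => sq_nonneg _) s α n) n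
  · rw [abs_neg, abs_inv, abs_of_pos (hgap.trans_le (hgap_le r hr))]
    exact inv_anti₀ hgap (hgap_le r hr)
  · have hr' : |r| ≤ a := by rw [abs_of_nonneg hr.1]; exact hr.2
    rw [sq (K * ρ ^ n)]
    gcongr
    · exact hle r hr' n
    · exact (hle r hr' (n + 1)).trans
        (mul_le_mul_of_nonneg_left (pow_le_pow_of_le_one hρ₀ hρ.le n.le_succ) hK)

end MobiusSum

lemma summable_smul_of_norm_sum_smul_sq_le {E : Type*} [NormedAddCommGroup E] [NormedSpace ℂ E]
    [CompleteSpace E] {v : ℕ → E} {Λ : ℝ} (hΛ : 0 ≤ Λ)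
    (h : ∀ (s : Finset ℕ) (c : ℕ → ℂ), ‖∑ j ∈ s, c j • v j‖ ^ 2 ≤ Λ * ∑ j ∈ s, ‖c j‖ ^ 2)
    (a : H2) : Summable fun j => a j • v j := by
  refine summable_iff_vanishing_norm.2 fun ε hε => ?_
  obtain ⟨s, hs⟩ :=
    summable_iff_vanishing_norm.1 a.summable_norm_sq (ε ^ 2 / (Λ + 1)) (by positivity)
  refine ⟨s, fun t ht => lt_of_pow_lt_pow_left₀ 2 hε.le ?_⟩
  have hnonneg : 0 ≤ ∑ j ∈ t, ‖a j‖ ^ 2 := Finset.sum_nonneg fun j _ => sq_nonneg _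
  have htail := hs t ht
  rw [Real.norm_of_nonneg hnonneg, lt_div_iff₀ (by positivity)] at htail
  linarith [h t a]

lemma exists_clm_hasSum_smul {E : Type*} [NormedAddCommGroup E] [NormedSpace ℂ E]
    [CompleteSpace E] {v : ℕ → E} {Λ : ℝ} (hΛ : 0 ≤ Λ)
    (h : ∀ (s : Finset ℕ) (c : ℕ → ℂ), ‖∑ j ∈ s, c j • v j‖ ^ 2 ≤ Λ * ∑ j ∈ s, ‖c j‖ ^ 2) :
    ∃ T : H2 →L[ℂ] E, ∀ a : H2, HasSum (fun j => a j • v j) (T a) := by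
  have hsum := summable_smul_of_norm_sum_smul_sq_le hΛ h
  refine ⟨LinearMap.mkContinuous
    { toFun := fun a => ∑' j, a j • v j
      map_add' := fun a b => by
        simp only [lp.coeFn_add, Pi.add_apply, add_smul, (hsum a).tsum_add (hsum b)]
      map_smul' := fun c a => by
        simp only [lp.coeFn_smul, Pi.smul_apply, smul_assoc, (hsum a).tsum_const_smul c,
          RingHom.id_apply] }
    (√Λ) fun a => ?_, fun a => (hsum a).hasSum⟩
  refine le_of_tendsto (hsum a).hasSum.norm (Eventually.of_forall fun s => ?_)
  refine le_of_sq_le_sq ?_ (by positivity)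
  calc ‖∑ j ∈ s, a j • v j‖ ^ 2 ≤ Λ * ∑ j ∈ s, ‖a j‖ ^ 2 := h s a
    _ ≤ Λ * ‖a‖ ^ 2 := by
        gcongr
        exact sum_le_hasSum s (fun j _ => sq_nonneg _) a.hasSum_norm_sq
    _ = (√Λ * ‖a‖) ^ 2 := by rw [mul_pow, Real.sq_sqrt hΛ]

namespace IsRegularWeight

variable {β : ℕ → ℝ} {r : ℝ}

lemma memℓp_mul_mobiusCoeff (hβ : IsRegularWeight β) (hr : |r| < 1) (j : ℕ) :
    Memℓp (fun k => (β k * mobiusCoeff r j k : ℂ)) 2 := by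
  obtain ⟨ρ, hrρ, hρ⟩ := exists_between hr
  obtain ⟨K, hK, hbound⟩ := exists_abs_mobiusCoeff_le (abs_nonneg r) hrρ hρ j
  obtain ⟨C, σ, hσ₀, hσ₁, hC⟩ := hβ.exists_mul_pow_le ((abs_nonneg r).trans hrρ.le) hρ
  refine memℓp_two_of_norm_le_mul_pow (C := K * C) hσ₀ hσ₁ fun k => ?_
  have hpos := (hβ.pos k).le
  calc ‖(β k * mobiusCoeff r j k : ℂ)‖ = β k * |mobiusCoeff r j k| := by
        rw [norm_mul, norm_real, norm_real, Real.norm_of_nonneg hpos, Real.norm_eq_abs]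
    _ ≤ β k * (K * ρ ^ k) := by gcongr; exact hbound r le_rfl k
    _ = K * (β k * ρ ^ k) := by ring
    _ ≤ K * (C * σ ^ k) := by gcongr K * ?_; exact hC k
    _ = K * C * σ ^ k := by ring

/-- The vector representing the function `mobius r ^ j`. -/
def mobiusPow (hβ : IsRegularWeight β) (hr : |r| < 1) (j : ℕ) : H2 :=
  ⟨_, hβ.memℓp_mul_mobiusCoeff hr j⟩

lemma mobiusPow_apply (hβ : IsRegularWeight β) (hr : |r| < 1) (j k : ℕ) :
    hβ.mobiusPow hr j k = β k * mobiusCoeff r j k := rfl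

lemma repFun_mobiusPow (hβ : IsRegularWeight β) (hr : |r| < 1) (j : ℕ) {z : ℂ}
    (hz : z ∈ unitDisk) : repFun β (hβ.mobiusPow hr j) z = mobius r z ^ j :=
  (hβ.hasSum_repFun hz _).unique <| (hasSum_mobiusCoeff hr hz j).congr_fun fun k => by
    rw [mobiusPow_apply, mul_div_cancel_left₀ _ (hβ.cast_ne_zero k)]

lemma norm_sum_smul_mobiusPow_sq_le (hβ : IsRegularWeight β) (hr : |r| < 1) {Λ : ℝ}
    {s : Finset ℕ} {α : ℕ → ℂ}
    (h : ∀ n, ∑ k ∈ Finset.range n, β k ^ 2 * ‖mobiusSum s α r k‖ ^ 2 ≤ Λ) :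
    ‖∑ j ∈ s, α j • hβ.mobiusPow hr j‖ ^ 2 ≤ Λ := by
  rw [← (H2.hasSum_norm_sq _).tsum_eq]
  refine Real.tsum_le_of_sum_range_le (fun k => sq_nonneg _) fun n => (Eq.le ?_).trans (h n)
  refine Finset.sum_congr rfl fun k _ => ?_
  have hcoord : (∑ j ∈ s, α j • hβ.mobiusPow hr j : H2) k = β k * mobiusSum s α r k := by
    rw [lp.coeFn_sum, Finset.sum_apply, mobiusSum, Finset.mul_sum]
    refine Finset.sum_congr rfl fun j _ => ?_
    rw [lp.coeFn_smul, Pi.smul_apply, mobiusPow_apply, smul_eq_mul, real_smul]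
    ring
  rw [hcoord, norm_mul, norm_real, mul_pow, Real.norm_eq_abs, sq_abs]

end IsRegularWeight

theorem IsPolyGrowthWeight.exists_repComp_mobius_ofReal {β : ℕ → ℝ} (hβ : IsPolyGrowthWeight β)
    {r : ℝ} (hr₀ : 0 ≤ r) (hr₁ : r < 1) : ∃ C, RepComp β (mobius r) C := by
  have hreg := hβ.isRegularWeight
  have hr : |r| < 1 := by rwa [abs_of_nonneg hr₀]
  obtain ⟨Λ, hΛ, hle⟩ := hβ.exists_sum_mobiusSum_le (V := ℂ) hr₀ hr₁
  obtain ⟨C, hC⟩ := exists_clm_hasSum_smul (v := fun j => (β j : ℂ)⁻¹ • hreg.mobiusPow hr j) hΛ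
    fun s c => by
      have hnorm : ∀ j, β j ^ 2 * ‖c j * (β j : ℂ)⁻¹‖ ^ 2 = ‖c j‖ ^ 2 := fun j => by
        have := (hβ.pos j).ne'
        rw [norm_mul, norm_inv, norm_real, mul_pow, inv_pow, Real.norm_eq_abs, sq_abs]
        field_simp
      simpa only [smul_smul, hnorm] using
        hreg.norm_sum_smul_mobiusPow_sq_le hr (hle s fun j => c j * (β j : ℂ)⁻¹)
  refine ⟨C, fun a z hz => ?_⟩
  have hmob := mapsTo_mobius (ofReal_mem_unitDisk.2 hr) hz
  have heval := (hC a).mapL (hreg.evalCLM hz)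
  rw [hreg.evalCLM_apply] at heval
  refine heval.unique ((hreg.hasSum_repFun hmob a).congr_fun fun j => ?_)
  rw [map_smul, map_smul, hreg.evalCLM_apply, hreg.repFun_mobiusPow hr j hz, smul_eq_mul,
    smul_eq_mul, div_eq_mul_inv, mul_assoc]

lemma exists_repComp_const_mul (β : ℕ → ℝ) {u : ℂ} (hu : ‖u‖ = 1) :
    ∃ U, RepComp β (fun z => u * z) U := by
  obtain ⟨U, hU⟩ := exists_clm_apply_eq_mul_comp (v := fun k => u ^ k) (C := 1)
    (fun k => by rw [norm_pow, hu, one_pow]) Function.injective_id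
  refine ⟨U, fun a z _ => tsum_congr fun k => ?_⟩
  rw [hU, id, mul_pow]
  ring

lemma RepComp.comp {β : ℕ → ℝ} {φ ψ : ℂ → ℂ} {S T : H2 →L[ℂ] H2} (hS : RepComp β φ S)
    (hT : RepComp β ψ T) (hψ : Set.MapsTo ψ unitDisk unitDisk) : RepComp β (φ ∘ ψ) (T * S) :=
  fun a z hz => (hT (S a) z hz).trans (hS a (ψ z) (hψ hz))

lemma RepComp.congr {β : ℕ → ℝ} {φ ψ : ℂ → ℂ} {S : H2 →L[ℂ] H2} (hS : RepComp β φ S)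
    (h : Set.EqOn φ ψ unitDisk) : RepComp β ψ S :=
  fun a z hz => h hz ▸ hS a z hz

lemma mobius_mul {u : ℂ} (hu : ‖u‖ = 1) (z₀ z : ℂ) :
    mobius (u * z₀) (u * z) = u * mobius z₀ z := by
  have hconj : (starRingEnd ℂ) u * u = 1 := by rw [conj_mul', hu]; simp
  have hden : 1 - (starRingEnd ℂ) (u * z₀) * (u * z) = 1 - (starRingEnd ℂ) z₀ * z := by
    rw [map_mul]
    linear_combination (-(starRingEnd ℂ) z₀ * z) * hconj
  rw [mobius, mobius, hden, ← mul_sub, mul_div_assoc]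

lemma IsPolyGrowthWeight.exists_repComp_mobius {β : ℕ → ℝ} (hβ : IsPolyGrowthWeight β) {z₀ : ℂ}
    (hz₀ : z₀ ∈ unitDisk) : ∃ C, RepComp β (mobius z₀) C := by
  set u := exp (z₀.arg * I)
  have hu : ‖u‖ = 1 := norm_exp_ofReal_mul_I _
  have hu_inv : ‖u⁻¹‖ = 1 := by rw [norm_inv, hu, inv_one]
  have hu₀ : u ≠ 0 := exp_ne_zero _
  have hpolar : u * ‖z₀‖ = z₀ := by rw [mul_comm]; exact norm_mul_exp_arg_mul_I z₀
  have hrot : Set.MapsTo (fun z => u⁻¹ * z) unitDisk unitDisk := fun z hz => by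
    rwa [mem_unitDisk, norm_mul, hu_inv, one_mul, ← mem_unitDisk]
  have hr : |‖z₀‖| < 1 := by rwa [abs_norm, ← mem_unitDisk]
  obtain ⟨C, hC⟩ := hβ.exists_repComp_mobius_ofReal (norm_nonneg z₀) (mem_unitDisk.1 hz₀)
  obtain ⟨U, hU⟩ := exists_repComp_const_mul β hu
  obtain ⟨V, hV⟩ := exists_repComp_const_mul β hu_inv
  refine ⟨_, ((hU.comp hC (mapsTo_mobius (ofReal_mem_unitDisk.2 hr))).comp hV hrot).congr
    fun z _ => ?_⟩
  simp only [Function.comp_apply, ← mobius_mul hu, hpolar, mul_inv_cancel_left₀ hu₀]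

namespace IsDiskAut

variable {φ : ℂ → ℂ}

lemma mapsTo (hφ : IsDiskAut φ) : Set.MapsTo φ unitDisk unitDisk := by
  obtain ⟨θ, z₀, hz₀, hφ⟩ := hφ
  intro z hz
  rw [mem_unitDisk, hφ, norm_mul, norm_exp_ofReal_mul_I, one_mul]
  exact mem_unitDisk.1 (mapsTo_mobius hz₀ hz)

lemma exists_invOn (hφ : IsDiskAut φ) :
    ∃ ψ, IsDiskAut ψ ∧ Set.InvOn ψ φ unitDisk unitDisk := by
  obtain ⟨θ, z₀, hz₀, hφ⟩ := hφ
  set u := exp (θ * I)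
  have hu : ‖u‖ = 1 := norm_exp_ofReal_mul_I θ
  have hu₀ : u ≠ 0 := exp_ne_zero _
  have hu_inv : exp ((-θ : ℝ) * I) = u⁻¹ := by rw [ofReal_neg, neg_mul, exp_neg]
  have hz₀' : u * z₀ ∈ unitDisk := by rwa [mem_unitDisk, norm_mul, hu, one_mul, ← mem_unitDisk]
  refine ⟨fun z => u⁻¹ * mobius (u * z₀) z, ⟨-θ, u * z₀, hz₀', fun z => by rw [hu_inv]⟩,
    fun z hz => ?_, fun z hz => ?_⟩
  · beta_reduce
    rw [hφ, mobius_mul hu, mobius_mobius hz₀ hz, inv_mul_cancel_left₀ hu₀]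
  · rw [hφ, ← mobius_mul hu, mul_inv_cancel_left₀ hu₀, mobius_mobius hz₀' hz]

lemma exists_repComp (hφ : IsDiskAut φ) {β : ℕ → ℝ} (hβ : IsPolyGrowthWeight β) :
    ∃ C, RepComp β φ C := by
  obtain ⟨θ, z₀, hz₀, hφ⟩ := hφ
  obtain ⟨C, hC⟩ := hβ.exists_repComp_mobius hz₀
  obtain ⟨U, hU⟩ := exists_repComp_const_mul β (norm_exp_ofReal_mul_I θ)
  exact ⟨_, (hU.comp hC (mapsTo_mobius hz₀)).congr fun z _ => (hφ z).symm⟩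

end IsDiskAut

lemma RepComp.leftInverse {β : ℕ → ℝ} (hβ : IsRegularWeight β) {φ ψ : ℂ → ℂ} {S T : H2 →L[ℂ] H2}
    (hS : RepComp β φ S) (hT : RepComp β ψ T) (hψ : Set.MapsTo ψ unitDisk unitDisk)
    (h : Set.LeftInvOn φ ψ unitDisk) : Function.LeftInverse T S := fun a =>
  hβ.ext_repFun fun z hz => (hS.comp hT hψ a z hz).trans (congrArg (repFun β a) (h hz))

lemma IsDiskAut.exists_repComp_equiv {φ : ℂ → ℂ} (hφ : IsDiskAut φ) {β : ℕ → ℝ}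
    (hβ : IsPolyGrowthWeight β) : ∃ C : H2 ≃L[ℂ] H2, RepComp β φ C := by
  obtain ⟨ψ, hψ, hψφ, hφψ⟩ := hφ.exists_invOn
  obtain ⟨C, hC⟩ := hφ.exists_repComp hβ
  obtain ⟨D, hD⟩ := hψ.exists_repComp hβ
  exact ⟨.equivOfInverse C D (hC.leftInverse hβ.isRegularWeight hD hψ.mapsTo hφψ)
    (hD.leftInverse hβ.isRegularWeight hC hφ.mapsTo hψφ), hC⟩

lemma RepComp.intertwines {β : ℕ → ℝ} (hβ : IsRegularWeight β) {φ h₁ h₂ : ℂ → ℂ}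
    {C T₁ T₂ : H2 →L[ℂ] H2} (hC : RepComp β φ C) (hφ : Set.MapsTo φ unitDisk unitDisk)
    (hT₁ : RepMul β h₁ T₁) (hT₂ : RepMul β h₂ T₂) (h : Set.EqOn h₂ (h₁ ∘ φ) unitDisk) (a : H2) :
    C (T₁ a) = T₂ (C a) :=
  hβ.ext_repFun fun z hz => by
    rw [hC _ z hz, hT₁ _ _ (hφ hz), hT₂ _ z hz, hC _ z hz, h hz, Function.comp_apply]

/-! ### Similarity of direct sums -/

lemma exists_hm_equiv_iff_exists_pi_equiv {m₁ m₂ : ℕ} {T₁ T₂ : H2 →L[ℂ] H2} :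
    (∃ X : Hm m₁ ≃L[ℂ] Hm m₂, ∀ v : Hm m₁,
        X (WithLp.toLp 2 (fun i => T₁ (v i))) = WithLp.toLp 2 (fun i => T₂ (X v i))) ↔
      ∃ X : (Fin m₁ → H2) ≃L[ℂ] (Fin m₂ → H2), ∀ v,
        X (diagCLM (Fin m₁) T₁ v) = diagCLM (Fin m₂) T₂ (X v) := by
  let E (m : ℕ) : Hm m ≃L[ℂ] (Fin m → H2) := PiLp.continuousLinearEquiv 2 ℂ fun _ => H2
  constructor
  · rintro ⟨X, hX⟩
    exact ⟨(E m₁).symm.trans (X.trans (E m₂)), fun v => congrArg (E m₂) (hX ((E m₁).symm v))⟩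
  · rintro ⟨X, hX⟩
    exact ⟨(E m₁).trans (X.trans (E m₂).symm), fun v => congrArg (E m₂).symm (hX (E m₁ v))⟩

theorem statement18_general {β : ℕ → ℝ} (hβ : IsPolyGrowthWeight β) {h₁ h₂ : ℂ → ℂ}
    {T₁ T₂ Tz : H2 →L[ℂ] H2} (hT₁ : RepMul β h₁ T₁) (hT₂ : RepMul β h₂ T₂)
    (hTz : RepMul β (fun z => z) Tz) (hc₁ : commutant T₁ = commutant Tz)
    (hc₂ : commutant T₂ = commutant Tz) {m₁ m₂ : ℕ} (hm₁ : 0 < m₁) (hm₂ : 0 < m₂) :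
    (∃ X : Hm m₁ ≃L[ℂ] Hm m₂, ∀ v : Hm m₁,
        X (WithLp.toLp 2 (fun i => T₁ (v i))) = WithLp.toLp 2 (fun i => T₂ (X v i))) ↔
      (m₁ = m₂ ∧ ∃ φ : ℂ → ℂ, IsDiskAut φ ∧ ∀ z ∈ unitDisk, h₂ z = h₁ (φ z)) := by
  rw [exists_hm_equiv_iff_exists_pi_equiv]
  constructor
  · rintro ⟨X, hX⟩
    have : Nonempty (Fin m₁) := Fin.pos_iff_nonempty.1 hm₁
    have : Nonempty (Fin m₂) := Fin.pos_iff_nonempty.1 hm₂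
    simpa only [Fintype.card_fin] using
      hβ.isRegularWeight.exists_isDiskAut_of_similar hT₁ hT₂ hTz hc₁ hc₂ hX
  · rintro ⟨rfl, φ, hφ, h⟩
    obtain ⟨C, hC⟩ := hφ.exists_repComp_equiv hβ
    exact ⟨.piCongrRight fun _ => C, piCongrRight_diagCLM
      (hC.intertwines hβ.isRegularWeight hφ.mapsTo hT₁ hT₂ h)⟩

/-- Let `H²_β` be of polynomial growth, `h₁, h₂` analytic on a
neighbourhood of the closed disk with `{M_{h₁}}' = {M_{h₂}}' = {M_z}'`, and
`m₁, m₂ ≥ 1`.  Then `⊕^{m₁} M_{h₁} ∼ ⊕^{m₂} M_{h₂}` iff `m₁ = m₂` and `h₂ = h₁ ∘ φ`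
for some `φ ∈ Aut(𝔻)`. -/
theorem statement18 (w : ℕ → ℝ) (hw : PolyGrowth w) (h₁ h₂ : ℂ → ℂ)
    (hh₁ : AnalyticOnClosedDisk h₁) (hh₂ : AnalyticOnClosedDisk h₂)
    (T₁ T₂ Tz : H2 →L[ℂ] H2)
    (hT₁ : RepMul (betaSeq w) h₁ T₁) (hT₂ : RepMul (betaSeq w) h₂ T₂)
    (hTz : RepMul (betaSeq w) (fun z => z) Tz)
    (hc₁ : commutant T₁ = commutant Tz) (hc₂ : commutant T₂ = commutant Tz)
    (m₁ m₂ : ℕ) (hm₁ : 0 < m₁) (hm₂ : 0 < m₂) :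
    (∃ X : Hm m₁ ≃L[ℂ] Hm m₂, ∀ v : Hm m₁,
        X (WithLp.toLp 2 (fun i => T₁ (v i))) = WithLp.toLp 2 (fun i => T₂ (X v i))) ↔
      (m₁ = m₂ ∧ ∃ φ : ℂ → ℂ, IsDiskAut φ ∧ ∀ z ∈ unitDisk, h₂ z = h₁ (φ z)) :=
  statement18_general hw.isPolyGrowthWeight hT₁ hT₂ hTz hc₁ hc₂ hm₁ hm₂
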